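/- arXiv:2310.14473 — 3 statements merged into one kernel-verified Lean document; each statement's English description precedes it below -/
import Mathlib

section
/- (Dual attainment) Assume [A'] and that (μ, ν) is irreducible. Then there exist Borel measurable functions φ, ψ : ℝ → ℝ ∪ {+∞}, finite μ-a.e. and ν-a.e. respectively, and Borel measurable θ_l : ℝ → ℝ (l = 1,…,L), such that c_l(x,y) ≤ φ(x) + ψ(y) + θ_l(x)(y − x) for all l and all (x,y) ∈ ℝ², and such that for every maximizer (γ₁,…,γ_L) of the relaxed problem P̄_c, equality c_l(x,y) = φ(x) + ψ(y) + θ_l(x)(y − x) holds γ_l-a.e. for each l = 1,…,L. -/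
open MeasureTheory ProbabilityTheory Set
open scoped ENNReal

noncomputable section

/-- Convex order between finite-first-moment probability measures on `ℝ`:
`μ ≼_c ν` iff `μ(f) ≤ ν(f)` for every convex `f`. -/
def ConvexOrder (μ ν : Measure ℝ) : Prop :=
  ∀ f : ℝ → ℝ, ConvexOn ℝ Set.univ f → Integrable f ν →
    Integrable f μ ∧ ∫ x, f x ∂μ ≤ ∫ x, f x ∂ν

/-- `κ` is a disintegration kernel of a martingale transport from `μ` to `ν`;
the associated transport plan is `π = μ ⊗ₘ κ ∈ ℳ(μ,ν)`. -/
def MartKernel (μ ν : Measure ℝ) (κ : Kernel ℝ ℝ) : Prop :=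
  IsMarkovKernel κ ∧ (μ ⊗ₘ κ).map Prod.snd = ν ∧
    ∀ᵐ x ∂μ, Integrable id (κ x) ∧ ∫ y, y ∂(κ x) = x

/-- The set `ℳ(μ,ν)` of martingale transports from `μ` to `ν`. -/
def MT (μ ν : Measure ℝ) : Set (Measure (ℝ × ℝ)) :=
  {π | ∃ κ : Kernel ℝ ℝ, MartKernel μ ν κ ∧ π = μ ⊗ₘ κ}

/-- Membership in `ℳ̄`: `γ` is a nonnegative finite measure which is zero or a scalar
multiple of a martingale transport between its own marginals. -/
def IsSubMart (γ : Measure (ℝ × ℝ)) : Prop :=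
  IsFiniteMeasure γ ∧ (γ = 0 ∨ ∃ κ : Kernel ℝ ℝ, IsMarkovKernel κ ∧
    γ.map Prod.fst ⊗ₘ κ = γ ∧
    ∀ᵐ x ∂(γ.map Prod.fst), Integrable id (κ x) ∧ ∫ y, y ∂(κ x) = x)

/-- Membership in `ℳ_L(μ,ν)`. -/
def MLfeasible (μ ν : Measure ℝ) {L : ℕ} (γ : Fin L → Measure (ℝ × ℝ)) : Prop :=
  (∀ l, IsSubMart (γ l)) ∧ (∑ l, γ l) ∈ MT μ ν

/-- The relaxed value `P̄_c` for a vector cost `c = (c_1, …, c_L)`. -/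
def RelaxedValue (μ ν : Measure ℝ) {L : ℕ} (c : Fin L → ℝ × ℝ → ℝ) : ℝ :=
  sSup {r | ∃ γ : Fin L → Measure (ℝ × ℝ), MLfeasible μ ν γ ∧
    r = ∑ l, ∫ p, c l p ∂(γ l)}

/-- The primal value `P_c` for an American option payoff `(c₁(x), c₂(x,y))`. -/
def PrimalValue (μ ν : Measure ℝ) (c₁ : ℝ → ℝ) (c₂ : ℝ × ℝ → ℝ) : ℝ :=
  sSup {r | ∃ (κ : Kernel ℝ ℝ) (μ₁ : Measure ℝ), MartKernel μ ν κ ∧ μ₁ ≤ μ ∧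
    r = ∫ p, c₁ p.1 ∂(μ₁ ⊗ₘ κ) + ∫ p, c₂ p ∂((μ - μ₁) ⊗ₘ κ)}

/-- Dual feasibility: membership of `(φ, ψ, θ)` in `Ψ̄_c`. -/
def DualFeasible (μ ν : Measure ℝ) {L : ℕ} (c : Fin L → ℝ × ℝ → ℝ)
    (φ ψ : ℝ → ℝ) (θ : Fin L → ℝ → ℝ) : Prop :=
  Continuous φ ∧ Integrable φ μ ∧ Continuous ψ ∧ Integrable ψ ν ∧
    (∀ l, Continuous (θ l) ∧ ∃ M, ∀ x, |θ l x| ≤ M) ∧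
    ∀ l, ∀ x y : ℝ, c l (x, y) ≤ φ x + ψ y + θ l x * (y - x)

/-- The dual value `D̄_c`. -/
def DualValue (μ ν : Measure ℝ) {L : ℕ} (c : Fin L → ℝ × ℝ → ℝ) : ℝ :=
  sInf {r | ∃ φ ψ θ, DualFeasible μ ν c φ ψ θ ∧ r = ∫ x, φ x ∂μ + ∫ y, ψ y ∂ν}

/-- Assumption [A'] for a vector cost. -/
def AssumpA' (μ ν : Measure ℝ) {L : ℕ} (c : Fin L → ℝ × ℝ → ℝ) : Prop :=
  IsProbabilityMeasure μ ∧ IsProbabilityMeasure ν ∧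
  Integrable id μ ∧ Integrable id ν ∧
  (∀ l, Continuous (c l)) ∧ ConvexOrder μ ν ∧
  ∃ v w : ℝ → ℝ, Continuous v ∧ Continuous w ∧ Integrable v μ ∧ Integrable w ν ∧
    ∀ x y : ℝ, ∑ l, |c l (x, y)| ≤ v x + w y

/-- Assumption [A] for an American payoff `(c₁, c₂)`. -/
def AssumpA (μ ν : Measure ℝ) (c₁ : ℝ → ℝ) (c₂ : ℝ × ℝ → ℝ) : Prop :=
  IsProbabilityMeasure μ ∧ IsProbabilityMeasure ν ∧
  Integrable id μ ∧ Integrable id ν ∧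
  Continuous c₁ ∧ Continuous c₂ ∧ ConvexOrder μ ν ∧
  ∃ v w : ℝ → ℝ, Continuous v ∧ Continuous w ∧ Integrable v μ ∧ Integrable w ν ∧
    ∀ x y : ℝ, |c₁ x| + |c₂ (x, y)| ≤ v x + w y

/-- The potential function `u_ξ`. -/
def potential (ξ : Measure ℝ) (x : ℝ) : ℝ := ∫ y, |x - y| ∂ξ

/-- `(μ, ν)` is an irreducible pair. -/
def IrreduciblePair (μ ν : Measure ℝ) : Prop :=
  IsOpen {x | potential μ x < potential ν x} ∧
  IsConnected {x | potential μ x < potential ν x} ∧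
  μ {x | potential μ x < potential ν x} = μ Set.univ

/-!
A Hahn–Banach extension of the superhedging functional, represented by measures, shows that the
relaxed problem is attained and that its value is the infimum of the prices of hedges
`(φ, ψ, (θ_l))` of `c`. After adding a fixed hedge, `c` may be taken nonnegative; then
`y ↦ sup_x (-φ x - θ_l x * (y - x))` is a convex function `χ` with `-φ ≤ χ ≤ ψ`, and the price of
the hedge is the sum of the three nonnegative terms `∫ (φ + χ) dμ`, `∫ (ψ - χ) dν` and
`∫ χ dν - ∫ χ dμ`. Irreducibility turns the bound on the last term into a pointwise bound on `χ`,
normalized to vanish to first order at a point of the domain. Along an optimizing sequence a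
Komlós-type selection therefore makes `φ` converge `μ`-almost everywhere and `ψ` converge
`ν`-almost everywhere. Around each point of the domain `ν` has mass on both sides, so the dual
inequality bounds the strategies and passes to the limit, and the optimality gaps are summable,
which gives equality almost everywhere for every maximizer.
-/

open Filter Topology

/-! ### Convex functions on the line -/

section Convex

variable {χ : ℝ → ℝ} {a b p q : ℝ}

/-- `p` is a subgradient of `χ` at `a`. -/
def IsSubgradient (χ : ℝ → ℝ) (a p : ℝ) : Prop := ∀ z, χ a + p * (z - a) ≤ χ z

theorem exists_isSubgradient (hχ : ConvexOn ℝ univ χ) (a : ℝ) : ∃ p, IsSubgradient χ a p := by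
  refine ⟨derivWithin χ (Ioi a) a, fun z => ?_⟩
  rcases lt_trichotomy z a with hz | rfl | hz
  · have hslope := (hχ.slope_le_leftDeriv_of_mem_interior (mem_univ z) (by simp) hz).trans
      (hχ.leftDeriv_le_rightDeriv_of_mem_interior (by simp))
    rw [slope_def_field, div_le_iff₀ (by linarith)] at hslope
    linarith
  · simp
  · have hslope := hχ.rightDeriv_le_slope_of_mem_interior (x := a) (by simp) (mem_univ z) hz
    rw [slope_def_field, le_div_iff₀ (by linarith)] at hslope
    linarith

theorem IsSubgradient.mono (hp : IsSubgradient χ a p) (hq : IsSubgradient χ b q) (hab : a < b) :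
    p ≤ q := by
  nlinarith [hp b, hq a]

/-- The nonnegative gap between `χ` and its supporting line of slope `p` at `a`. -/
def excess (χ : ℝ → ℝ) (a p z : ℝ) : ℝ := χ z - (χ a + p * (z - a))

theorem excess_self : excess χ a p a = 0 := by simp [excess]

theorem IsSubgradient.excess_nonneg (hp : IsSubgradient χ a p) (z : ℝ) : 0 ≤ excess χ a p z :=
  sub_nonneg.2 (hp z)

theorem convexOn_affine (r p a : ℝ) : ConvexOn ℝ univ fun z : ℝ => r + p * (z - a) :=
  ⟨convex_univ, fun x _ y _ s t _ _ hst => by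
    have : t = 1 - s := by linarith
    subst this
    simp only [smul_eq_mul]
    linarith⟩

theorem concaveOn_affine (r p a : ℝ) : ConcaveOn ℝ univ fun z : ℝ => r + p * (z - a) :=
  (convexOn_affine (-r) (-p) a).neg.congr fun z _ => by simp only [Pi.neg_apply]; ring

theorem convexOn_excess (hχ : ConvexOn ℝ univ χ) (a p : ℝ) : ConvexOn ℝ univ (excess χ a p) :=
  hχ.sub (concaveOn_affine (χ a) p a)

theorem convexOn_comp_neg (hχ : ConvexOn ℝ univ χ) : ConvexOn ℝ univ fun z => χ (-z) :=
  hχ.comp_linearMap (-LinearMap.id)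

theorem continuous_of_convexOn (hχ : ConvexOn ℝ univ χ) : Continuous χ :=
  continuousOn_univ.1 (hχ.continuousOn isOpen_univ)

theorem monotoneOn_Ici_of_convexOn (hχ : ConvexOn ℝ univ χ) (ha : ∀ z, χ a ≤ χ z) :
    MonotoneOn χ (Ici a) := fun _ hx y _ hxy =>
  (hχ.le_max_of_mem_Icc (mem_univ a) (mem_univ y) ⟨hx, hxy⟩).trans (max_le (ha y) le_rfl)

theorem convexOn_comp_max (hχ : ConvexOn ℝ univ χ) (ha : ∀ z, χ a ≤ χ z) :
    ConvexOn ℝ univ fun z => χ (max z a) := by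
  have himage : (fun z => max z a) '' univ = Ici a := by
    ext z
    refine ⟨?_, fun hz => ⟨z, trivial, max_eq_left hz⟩⟩
    rintro ⟨w, -, rfl⟩
    exact le_max_right w a
  refine ConvexOn.comp (f := fun z => max z a) ?_
    ((convexOn_id convex_univ).sup (convexOn_const a convex_univ)) ?_ <;> rw [himage]
  · exact hχ.subset (subset_univ _) (convex_Ici a)
  · exact monotoneOn_Ici_of_convexOn hχ ha

theorem convexOn_comp_min (hχ : ConvexOn ℝ univ χ) (ha : ∀ z, χ a ≤ χ z) :
    ConvexOn ℝ univ fun z => χ (min z a) := by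
  have := convexOn_comp_neg (convexOn_comp_max (a := -a) (convexOn_comp_neg hχ)
    (fun z => by simpa using ha (-z)))
  simpa only [max_neg_neg, neg_neg] using this

theorem comp_max_add_comp_min (χ : ℝ → ℝ) (z a : ℝ) : χ (max z a) + χ (min z a) = χ z + χ a := by
  rcases le_total z a with h | h <;> simp [h, add_comm]

end Convex

/-! ### The domain of an irreducible pair -/

section Potential

variable {ξ μ ν : Measure ℝ}

theorem integrable_abs_sub [IsFiniteMeasure ξ] (hξ : Integrable id ξ) (k : ℝ) :
    Integrable (fun z => |k - z|) ξ :=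
  ((integrable_const k).sub hξ).abs

theorem integrable_posPart_sub [IsFiniteMeasure ξ] (hξ : Integrable id ξ) (k : ℝ) :
    Integrable (fun z => max (z - k) 0) ξ :=
  (hξ.sub (integrable_const k)).pos_part

theorem integrable_affine [IsFiniteMeasure ξ] (hξ : Integrable id ξ) (r p a : ℝ) :
    Integrable (fun z => r + p * (z - a)) ξ :=
  (integrable_const r).add ((hξ.sub (integrable_const a)).const_mul p)

theorem integral_affine [IsProbabilityMeasure ξ] (hξ : Integrable id ξ) (r p a : ℝ) :
    ∫ z, (r + p * (z - a)) ∂ξ = r + p * (∫ z, z ∂ξ - a) := by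
  have hsub : Integrable (fun z => z - a) ξ := hξ.sub (integrable_const a)
  rw [integral_add (integrable_const r) (hsub.const_mul p), integral_const_mul,
    integral_sub (f := fun z => z) hξ (integrable_const a)]
  simp

theorem integral_posPart_sub [IsProbabilityMeasure ξ] (hξ : Integrable id ξ) (k : ℝ) :
    ∫ z, max (z - k) 0 ∂ξ = (potential ξ k + (∫ z, z ∂ξ - k)) / 2 := by
  have hmax : ∀ z : ℝ, max (z - k) 0 = (|k - z| + (0 + 1 * (z - k))) / 2 := fun z => by grind
  simp only [hmax]
  rw [integral_div, integral_add (integrable_abs_sub hξ k) (integrable_affine hξ 0 1 k),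
    integral_affine hξ, potential]
  ring

theorem integral_posPart_sub_eq_zero_iff [IsFiniteMeasure ξ] (hξ : Integrable id ξ) (k : ℝ) :
    ∫ z, max (z - k) 0 ∂ξ = 0 ↔ ξ (Ioi k) = 0 := by
  rw [integral_eq_zero_iff_of_nonneg (f := fun z => max (z - k) 0)
    (fun z => le_max_right _ _) (integrable_posPart_sub hξ k)]
  simp [Filter.EventuallyEq, ae_iff, Ioi]

theorem lipschitzWith_potential [IsProbabilityMeasure ξ] (hξ : Integrable id ξ) :
    LipschitzWith 1 (potential ξ) := LipschitzWith.of_le_add fun a b => by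
  calc potential ξ a ≤ ∫ z, (|b - z| + dist a b) ∂ξ :=
        integral_mono (integrable_abs_sub hξ a)
          ((integrable_abs_sub hξ b).add (integrable_const _)) fun z => by
          have := abs_sub_le a b z
          simp only [Real.dist_eq]
          linarith
    _ = potential ξ b + dist a b := by
        rw [integral_add (integrable_abs_sub hξ b) (integrable_const _)]
        simp [potential]

instance isProbabilityMeasure_neg [IsProbabilityMeasure ξ] : IsProbabilityMeasure ξ.neg :=
  Measure.isProbabilityMeasure_map measurable_neg.aemeasurable

theorem integral_neg_measure (ξ : Measure ℝ) (f : ℝ → ℝ) : ∫ z, f z ∂ξ.neg = ∫ z, f (-z) ∂ξ :=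
  (MeasurableEquiv.neg ℝ).measurableEmbedding.integral_map f

theorem integrable_neg_measure_iff {f : ℝ → ℝ} :
    Integrable f ξ.neg ↔ Integrable (fun z => f (-z)) ξ :=
  (MeasurableEquiv.neg ℝ).measurableEmbedding.integrable_map_iff

theorem potential_neg (ξ : Measure ℝ) (x : ℝ) : potential ξ.neg x = potential ξ (-x) := by
  simp only [potential, integral_neg_measure]
  exact integral_congr_ae (.of_forall fun z => by dsimp only; rw [← abs_neg]; congr 1; ring)

/-- The set on which the potential of `ν` strictly exceeds that of `μ`, called `I` in the paper. -/
def domain (μ ν : Measure ℝ) : Set ℝ := {x | potential μ x < potential ν x}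

theorem domain_neg (μ ν : Measure ℝ) : domain μ.neg ν.neg = -domain μ ν := by
  ext x; simp [domain, potential_neg]

theorem ConvexOrder.integrable_id (h : ConvexOrder μ ν) (hν : Integrable id ν) : Integrable id μ :=
  (h id (convexOn_id convex_univ) hν).1

theorem ConvexOrder.neg (h : ConvexOrder μ ν) : ConvexOrder μ.neg ν.neg := fun f hf hfν => by
  simpa only [integrable_neg_measure_iff, integral_neg_measure] using
    h _ (convexOn_comp_neg hf) (integrable_neg_measure_iff.1 hfν)

/-- An irreducible pair of measures in convex order with finite first moments; that of `μ` is
finite because `id` is convex. -/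
structure IrreducibleOrder (μ ν : Measure ℝ) : Prop where
  integrable_id : Integrable id ν
  convexOrder : ConvexOrder μ ν
  irreducible : IrreduciblePair μ ν

namespace IrreducibleOrder

theorem integrable_id_left (h : IrreducibleOrder μ ν) : Integrable id μ :=
  h.convexOrder.integrable_id h.integrable_id

theorem isOpen_domain (h : IrreducibleOrder μ ν) : IsOpen (domain μ ν) := h.irreducible.1

theorem isConnected_domain (h : IrreducibleOrder μ ν) : IsConnected (domain μ ν) :=
  h.irreducible.2.1

theorem ae_mem_domain [IsFiniteMeasure μ] (h : IrreducibleOrder μ ν) : ∀ᵐ x ∂μ, x ∈ domain μ ν :=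
  (ae_mem_iff_measure_eq h.isOpen_domain.measurableSet.nullMeasurableSet).2 h.irreducible.2.2

theorem neg (h : IrreducibleOrder μ ν) : IrreducibleOrder μ.neg ν.neg where
  integrable_id := integrable_neg_measure_iff.2 h.integrable_id.neg
  convexOrder := h.convexOrder.neg
  irreducible := by
    change IsOpen (domain _ _) ∧ IsConnected (domain _ _) ∧ Measure.neg μ (domain _ _) = _
    rw [domain_neg, Measure.neg_apply, Measure.neg_apply, neg_neg, neg_univ]
    exact ⟨h.isOpen_domain.neg, (Homeomorph.neg ℝ).isConnected_preimage.2 h.isConnected_domain,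
      h.irreducible.2.2⟩

theorem lt_of_notMem_domain (h : IrreducibleOrder μ ν) {x y z : ℝ} (hx : x ∈ domain μ ν)
    (hxy : x < y) (hy : y ∉ domain μ ν) (hz : z ∈ domain μ ν) : z < y :=
  lt_of_not_ge fun hyz =>
    hy (h.isConnected_domain.isPreconnected.ordConnected.out hx hz ⟨hxy.le, hyz⟩)

theorem exists_measure_Ioi_lt [IsFiniteMeasure μ] (h : IrreducibleOrder μ ν)
    {ε : ℝ≥0∞} (hε : ε ≠ 0) : ∃ a ∈ domain μ ν, μ (Ioi a) < ε := by
  obtain ⟨x₁, hx₁⟩ := h.isConnected_domain.nonempty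
  obtain ⟨K, hK, hKc, hlt⟩ :=
    h.isOpen_domain.measurableSet.exists_isCompact_sdiff_lt (measure_ne_top μ _) hε
  obtain ⟨a, haK, ha⟩ := (hKc.insert x₁).exists_isGreatest (insert_nonempty x₁ K)
  refine ⟨a, insert_subset hx₁ hK haK, lt_of_le_of_lt (measure_mono_ae ?_) hlt⟩
  filter_upwards [h.ae_mem_domain] with z hz hza
  exact ⟨hz, fun hzK => (ha (mem_insert_of_mem x₁ hzK)).not_gt hza⟩

end IrreducibleOrder

end Potential

section Gap

variable {μ ν : Measure ℝ} {χ : ℝ → ℝ}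

/-- How much integration against `ν` exceeds integration against `μ`. -/
def gap (μ ν : Measure ℝ) (f : ℝ → ℝ) : ℝ := ∫ z, f z ∂ν - ∫ z, f z ∂μ

theorem ConvexOrder.gap_nonneg (h : ConvexOrder μ ν) (hχ : ConvexOn ℝ univ χ)
    (hi : Integrable χ ν) : 0 ≤ gap μ ν χ :=
  sub_nonneg.2 (h χ hχ hi).2

theorem ConvexOrder.integral_id_eq (h : ConvexOrder μ ν) (hν : Integrable id ν) :
    ∫ z, z ∂μ = ∫ z, z ∂ν := by
  refine (h id (convexOn_id convex_univ) hν).2.antisymm ?_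
  have := (h (fun z => -z) (concaveOn_id convex_univ).neg hν.neg).2
  rw [integral_neg, integral_neg] at this
  exact neg_le_neg_iff.1 this

theorem ConvexOrder.gap_posPart_sub [IsProbabilityMeasure μ] [IsProbabilityMeasure ν]
    (h : ConvexOrder μ ν) (hν : Integrable id ν) (k : ℝ) :
    gap μ ν (fun z => max (z - k) 0) = (potential ν k - potential μ k) / 2 := by
  rw [gap, integral_posPart_sub hν, integral_posPart_sub (h.integrable_id hν), h.integral_id_eq hν]
  ring

theorem ConvexOrder.gap_excess [IsProbabilityMeasure μ] [IsProbabilityMeasure ν]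
    (h : ConvexOrder μ ν) (hχ : ConvexOn ℝ univ χ) (hν : Integrable id ν) (hi : Integrable χ ν)
    (a p : ℝ) : gap μ ν (excess χ a p) = gap μ ν χ := by
  have hμ := h.integrable_id hν
  simp only [gap, excess]
  rw [integral_sub hi (integrable_affine hν _ _ _),
    integral_sub (h χ hχ hi).1 (integrable_affine hμ _ _ _), integral_affine hν,
    integral_affine hμ, h.integral_id_eq hν]
  ring

theorem integrable_comp_max [IsFiniteMeasure ν] (hχ : ConvexOn ℝ univ χ) (hi : Integrable χ ν)
    (a : ℝ) : Integrable (fun z => χ (max z a)) ν := by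
  refine (hi.abs.add (integrable_const |χ a|)).mono'
    ((continuous_of_convexOn hχ).comp (by fun_prop)).aestronglyMeasurable (.of_forall fun z => ?_)
  simp only [Real.norm_eq_abs, Pi.add_apply]
  rcases max_choice z a with h | h <;> rw [h] <;> linarith [abs_nonneg (χ a), abs_nonneg (χ z)]

theorem ConvexOrder.gap_comp_max_le [IsProbabilityMeasure μ] [IsProbabilityMeasure ν]
    (h : ConvexOrder μ ν) (hχ : ConvexOn ℝ univ χ) (hi : Integrable χ ν) {a : ℝ}
    (ha : ∀ z, χ a ≤ χ z) : gap μ ν (fun z => χ (max z a)) ≤ gap μ ν χ := by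
  have hsplit : (fun z => χ (min z a)) = fun z => χ z + χ a - χ (max z a) := by
    funext z; linarith [comp_max_add_comp_min χ z a]
  have hmax := integrable_comp_max hχ hi a
  have hmin : Integrable (fun z => χ (min z a)) ν :=
    hsplit ▸ (hi.add (integrable_const _)).sub hmax
  have hmaxμ := (h _ (convexOn_comp_max hχ ha) hmax).1
  have hiμ := (h χ hχ hi).1
  have := h.gap_nonneg (convexOn_comp_min hχ ha) hmin
  simp only [gap, hsplit] at this ⊢
  rw [integral_sub (f := fun z => χ z + χ a) (hi.add (integrable_const _)) hmax,
    integral_sub (f := fun z => χ z + χ a) (hiμ.add (integrable_const _)) hmaxμ,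
    integral_add hi (integrable_const _), integral_add hiμ (integrable_const _)] at this
  simp only [integral_const, probReal_univ, one_smul] at this
  linarith

end Gap

/-! ### Bounds on moderators -/

theorem measure_eq_zero_of_forall_measure_Ici {ξ : Measure ℝ} {s : Set ℝ}
    (hs : ∀ y ∈ s, ξ (Ici y) = 0) : ξ s = 0 := by
  refine measure_null_of_locally_null s fun y hy => ?_
  by_cases hleast : ∃ z ∈ s, z < y
  · obtain ⟨z, hz, hzy⟩ := hleast
    exact ⟨Ici z, mem_nhdsWithin_of_mem_nhds (Ici_mem_nhds hzy), hs z hz⟩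
  · push Not at hleast
    exact ⟨Ici y, mem_of_superset self_mem_nhdsWithin hleast, hs y hy⟩

section Slope

variable {μ ν : Measure ℝ} {χ : ℝ → ℝ} {a b p q : ℝ}

theorem excess_comp_max_sub_bounds (hχ : ConvexOn ℝ univ χ) (hp : IsSubgradient χ a p)
    (hq : IsSubgradient χ b q) (hab : a < b) (z : ℝ) :
    (q - p) * max (z - b) 0 ≤ excess χ a p (max z a) - excess χ b q (max z b) ∧
      excess χ a p (max z a) - excess χ b q (max z b) ≤ (q - p) * max (z - a) 0 := by
  have hpb := hp b
  have hqa := hq a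
  simp only [excess]
  rcases le_or_gt z a with hza | hza
  · simp [hza, hza.trans hab.le]
  rcases le_or_gt b z with hbz | hbz
  · rw [max_eq_left hza.le, max_eq_left hbz, max_eq_left (sub_nonneg.2 hbz),
      max_eq_left (sub_nonneg.2 hza.le)]
    constructor <;> linarith
  · rw [max_eq_left hza.le, max_eq_right hbz.le, max_eq_right (sub_nonpos.2 hbz.le),
      max_eq_left (sub_nonneg.2 hza.le)]
    obtain ⟨s, hs⟩ := exists_isSubgradient hχ z
    constructor
    · linarith [hp z]
    · nlinarith [hs a, hs.mono hq hbz]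

theorem IsSubgradient.gap_excess_comp_max_nonneg_le [IsProbabilityMeasure μ]
    [IsProbabilityMeasure ν] (h : ConvexOrder μ ν) (hν : Integrable id ν) (hχ : ConvexOn ℝ univ χ)
    (hi : Integrable χ ν) (hp : IsSubgradient χ a p) :
    Integrable (fun z => excess χ a p (max z a)) ν ∧
      0 ≤ gap μ ν (fun z => excess χ a p (max z a)) ∧
      gap μ ν (fun z => excess χ a p (max z a)) ≤ gap μ ν χ := by
  have hconv := convexOn_excess hχ a p
  have hint : Integrable (excess χ a p) ν := hi.sub (integrable_affine hν _ _ _)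
  have hmin : ∀ z, excess χ a p a ≤ excess χ a p z := fun z =>
    excess_self.trans_le (hp.excess_nonneg z)
  refine ⟨integrable_comp_max hconv hint a,
    h.gap_nonneg (convexOn_comp_max hconv hmin) (integrable_comp_max hconv hint a), ?_⟩
  exact (h.gap_comp_max_le hconv hint hmin).trans (h.gap_excess hχ hν hi a p).le

theorem ConvexOrder.slope_sub_mul_le [IsProbabilityMeasure μ] [IsProbabilityMeasure ν]
    (h : ConvexOrder μ ν) (hν : Integrable id ν) (hχ : ConvexOn ℝ univ χ) (hi : Integrable χ ν)
    (hp : IsSubgradient χ a p) (hq : IsSubgradient χ b q) (hab : a < b) :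
    (q - p) * ((potential ν b - potential μ a - (b - a)) / 2) ≤ gap μ ν χ := by
  have hμ := h.integrable_id hν
  obtain ⟨ia, -, hga⟩ := hp.gap_excess_comp_max_nonneg_le h hν hχ hi
  obtain ⟨ib, hgb, -⟩ := hq.gap_excess_comp_max_nonneg_le h hν hχ hi
  have iaμ := (h _ (convexOn_comp_max (convexOn_excess hχ a p) fun z =>
    excess_self.trans_le (hp.excess_nonneg z)) ia).1
  have ibμ := (h _ (convexOn_comp_max (convexOn_excess hχ b q) fun z =>
    excess_self.trans_le (hq.excess_nonneg z)) ib).1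
  have hbounds := excess_comp_max_sub_bounds hχ hp hq hab
  have hlower := integral_mono ((integrable_posPart_sub hν b).const_mul (q - p)) (ia.sub ib)
    fun z => (hbounds z).1
  have hupper := integral_mono (iaμ.sub ibμ) ((integrable_posPart_sub hμ a).const_mul (q - p))
    fun z => (hbounds z).2
  simp only [Pi.sub_apply] at hlower hupper
  rw [integral_const_mul, integral_posPart_sub hν, integral_sub ia ib] at hlower
  rw [integral_const_mul, integral_posPart_sub hμ, integral_sub iaμ ibμ,
    h.integral_id_eq hν] at hupper
  simp only [gap] at hga hgb ⊢
  linarith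

end Slope

section Moderator

variable {μ ν : Measure ℝ} {χ : ℝ → ℝ} {x₀ C : ℝ}

/-- A nonnegative convex function vanishing at `x₀` whose integrals differ by at most `C`. Such
functions measure how far the two parts of a hedge are from being separately integrable. -/
structure IsModerator (μ ν : Measure ℝ) (x₀ C : ℝ) (χ : ℝ → ℝ) : Prop where
  convexOn : ConvexOn ℝ univ χ
  nonneg : ∀ x, 0 ≤ χ x
  apply_base : χ x₀ = 0
  integrable : Integrable χ ν
  gap_le : gap μ ν χ ≤ C

theorem IsModerator.neg (hχ : IsModerator μ ν x₀ C χ) :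
    IsModerator μ.neg ν.neg (-x₀) C fun x => χ (-x) where
  convexOn := convexOn_comp_neg hχ.convexOn
  nonneg x := hχ.nonneg (-x)
  apply_base := by simpa using hχ.apply_base
  integrable := integrable_neg_measure_iff.2 (by simpa using hχ.integrable)
  gap_le := by simpa [gap, integral_neg_measure] using hχ.gap_le

/-- At `x`, all moderators have subgradients bounded by a common constant. -/
def SlopesBddAt (μ ν : Measure ℝ) (x₀ C x : ℝ) : Prop :=
  ∃ K, ∀ χ, IsModerator μ ν x₀ C χ → ∃ p, IsSubgradient χ x p ∧ |p| ≤ K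

theorem slopesBddAt_base (μ ν : Measure ℝ) (x₀ C : ℝ) : SlopesBddAt μ ν x₀ C x₀ :=
  ⟨0, fun χ hχ => ⟨0, fun z => by simpa [hχ.apply_base] using hχ.nonneg z, by simp⟩⟩

variable [IsProbabilityMeasure μ] [IsProbabilityMeasure ν]

namespace IrreducibleOrder

theorem abs_slope_sub_mul_le (h : IrreducibleOrder μ ν) (hχ : IsModerator μ ν x₀ C χ)
    {a b p q δ : ℝ} (hp : IsSubgradient χ a p) (hq : IsSubgradient χ b q) (hne : a ≠ b)
    (ha : 4 * δ ≤ potential ν a - potential μ a) (hab : dist a b ≤ δ) : |q - p| * δ ≤ C := by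
  have hνab := (lipschitzWith_potential h.integrable_id).dist_le_mul a b
  have hμab := (lipschitzWith_potential h.integrable_id_left).dist_le_mul a b
  simp only [Real.dist_eq, NNReal.coe_one, one_mul] at hab hνab hμab
  have hν' := abs_le.1 (hνab.trans hab)
  have hμ' := abs_le.1 (hμab.trans hab)
  have hab' := abs_le.1 hab
  refine le_trans ?_ hχ.gap_le
  rcases hne.lt_or_gt with hlt | hlt
  · rw [abs_of_nonneg (sub_nonneg.2 (hp.mono hq hlt))]
    refine le_trans (mul_le_mul_of_nonneg_left ?_ (sub_nonneg.2 (hp.mono hq hlt)))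
      (h.convexOrder.slope_sub_mul_le h.integrable_id hχ.convexOn hχ.integrable hp hq hlt)
    linarith
  · rw [abs_sub_comm, abs_of_nonneg (sub_nonneg.2 (hq.mono hp hlt))]
    refine le_trans (mul_le_mul_of_nonneg_left ?_ (sub_nonneg.2 (hq.mono hp hlt)))
      (h.convexOrder.slope_sub_mul_le h.integrable_id hχ.convexOn hχ.integrable hq hp hlt)
    linarith

theorem slopesBddAt_congr (h : IrreducibleOrder μ ν) {a b δ : ℝ} (hδ : 0 < δ)
    (ha : 4 * δ ≤ potential ν a - potential μ a) (hab : dist a b ≤ δ) :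
    SlopesBddAt μ ν x₀ C a ↔ SlopesBddAt μ ν x₀ C b := by
  rcases eq_or_ne a b with rfl | hne
  · rfl
  constructor <;> rintro ⟨K, hK⟩ <;> refine ⟨K + C / δ, fun χ hχ => ?_⟩ <;>
    obtain ⟨p, hp, hpK⟩ := hK χ hχ
  · obtain ⟨q, hq⟩ := exists_isSubgradient hχ.convexOn b
    have := (le_div_iff₀ hδ).2 (h.abs_slope_sub_mul_le hχ hp hq hne ha hab)
    exact ⟨q, hq, by linarith [abs_sub_abs_le_abs_sub q p]⟩
  · obtain ⟨q, hq⟩ := exists_isSubgradient hχ.convexOn a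
    have := (le_div_iff₀ hδ).2 (h.abs_slope_sub_mul_le hχ hq hp hne ha hab)
    exact ⟨q, hq, by linarith [abs_sub_abs_le_abs_sub q p, abs_sub_comm p q]⟩

theorem slopesBddAt (h : IrreducibleOrder μ ν) {y : ℝ} (hx₀ : x₀ ∈ domain μ ν)
    (hy : y ∈ domain μ ν) : SlopesBddAt μ ν x₀ C y := by
  refine (h.isConnected_domain.isPreconnected.induction₂'
    (fun x y => SlopesBddAt μ ν x₀ C x ↔ SlopesBddAt μ ν x₀ C y) (fun x hx => ?_)
    (fun _ _ _ _ _ _ => Iff.trans) hx₀ hy).1 (slopesBddAt_base μ ν x₀ C)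
  have hδ : 0 < (potential ν x - potential μ x) / 4 := by
    have : potential μ x < potential ν x := hx
    linarith
  filter_upwards [mem_nhdsWithin_of_mem_nhds (Metric.closedBall_mem_nhds x hδ)] with y hy
  have := h.slopesBddAt_congr (x₀ := x₀) (C := C) hδ (by linarith) (Metric.mem_closedBall'.1 hy)
  exact ⟨this, this.symm⟩

theorem moderators_bddAbove_of_mem_domain (h : IrreducibleOrder μ ν) {y : ℝ}
    (hx₀ : x₀ ∈ domain μ ν) (hy : y ∈ domain μ ν) :
    ∃ K, ∀ χ, IsModerator μ ν x₀ C χ → χ y ≤ K := by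
  obtain ⟨K, hK⟩ := h.slopesBddAt (C := C) hx₀ hy
  refine ⟨K * |y - x₀|, fun χ hχ => ?_⟩
  obtain ⟨p, hp, hpK⟩ := hK χ hχ
  have hbase := hp x₀
  rw [hχ.apply_base] at hbase
  calc χ y ≤ p * (y - x₀) := by linarith
    _ ≤ |p| * |y - x₀| := (le_abs_self _).trans (abs_mul _ _).le
    _ ≤ K * |y - x₀| := by gcongr

theorem excess_mul_le (h : IrreducibleOrder μ ν) (hχ : IsModerator μ ν x₀ C χ) {a y p : ℝ}
    (ha : a ∈ domain μ ν) (hay : a < y) (hy : y ∉ domain μ ν) (hp : IsSubgradient χ a p) :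
    excess χ a p y * (ν.real {y} - μ.real (Ioi a)) ≤ C := by
  set R : ℝ → ℝ := fun z => excess χ a p (max z a) with hR
  obtain ⟨hi, -, hgap⟩ :=
    hp.gap_excess_comp_max_nonneg_le h.convexOrder h.integrable_id hχ.convexOn hχ.integrable
  have hmin : ∀ z, excess χ a p a ≤ excess χ a p z := fun z =>
    excess_self.trans_le (hp.excess_nonneg z)
  have hconv := convexOn_excess hχ.convexOn a p
  have hν : excess χ a p y * ν.real {y} ≤ ∫ z, R z ∂ν := by
    refine le_trans (mul_le_mul_of_nonneg_left (measureReal_mono ?_) (hp.excess_nonneg y))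
      (mul_meas_ge_le_integral_of_nonneg (.of_forall fun z => hp.excess_nonneg _) hi _)
    rintro _ rfl
    simp [max_eq_left hay.le]
  have hμ : ∫ z, R z ∂μ ≤ excess χ a p y * μ.real (Ioi a) := by
    have hind : Integrable ((Ioi a).indicator fun _ => excess χ a p y) μ :=
      (integrable_const _).indicator measurableSet_Ioi
    refine (integral_mono_ae (h.convexOrder R (convexOn_comp_max hconv hmin) hi).1 hind
      ?_).trans_eq ?_
    · filter_upwards [h.ae_mem_domain] with z hz
      rcases le_or_gt z a with hza | hza
      · simp [hR, hza, excess_self]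
      · rw [indicator_of_mem (mem_Ioi.2 hza)]
        simp only [hR, max_eq_left hza.le]
        exact monotoneOn_Ici_of_convexOn hconv hmin hza.le hay.le
          (h.lt_of_notMem_domain ha hay hy hz).le
    · rw [integral_indicator_const _ measurableSet_Ioi, smul_eq_mul, mul_comm]
  have := hgap.trans hχ.gap_le
  rw [gap] at this
  linarith

theorem moderators_bddAbove_of_atom_right (h : IrreducibleOrder μ ν) {y : ℝ}
    (hx₀ : x₀ ∈ domain μ ν) (hxy : x₀ < y) (hy : y ∉ domain μ ν) (hatom : ν {y} ≠ 0) :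
    ∃ K, ∀ χ, IsModerator μ ν x₀ C χ → χ y ≤ K := by
  obtain ⟨a, ha, hlt⟩ := h.exists_measure_Ioi_lt hatom
  have hay := h.lt_of_notMem_domain hx₀ hxy hy ha
  have hmass : 0 < ν.real {y} - μ.real (Ioi a) :=
    sub_pos.2 ((ENNReal.toReal_lt_toReal (measure_ne_top _ _) (measure_ne_top _ _)).2 hlt)
  obtain ⟨K, hK⟩ := h.slopesBddAt (C := C) hx₀ ha
  obtain ⟨M, hM⟩ := h.moderators_bddAbove_of_mem_domain (C := C) hx₀ ha
  refine ⟨M + K * (y - a) + C / (ν.real {y} - μ.real (Ioi a)), fun χ hχ => ?_⟩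
  obtain ⟨p, hp, hpK⟩ := hK χ hχ
  have hexcess := (le_div_iff₀ hmass).2 (h.excess_mul_le hχ ha hay hy hp)
  have hslope : p * (y - a) ≤ K * (y - a) :=
    mul_le_mul_of_nonneg_right ((le_abs_self p).trans hpK) (sub_pos.2 hay).le
  rw [excess] at hexcess
  linarith [hM χ hχ]

theorem moderators_bddAbove (h : IrreducibleOrder μ ν) {y : ℝ} (hx₀ : x₀ ∈ domain μ ν)
    (hy : y ∈ domain μ ν ∨ ν {y} ≠ 0) : ∃ K, ∀ χ, IsModerator μ ν x₀ C χ → χ y ≤ K := by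
  by_cases hyI : y ∈ domain μ ν
  · exact h.moderators_bddAbove_of_mem_domain hx₀ hyI
  have hatom := hy.resolve_left hyI
  rcases lt_trichotomy x₀ y with hlt | rfl | hlt
  · exact h.moderators_bddAbove_of_atom_right hx₀ hlt hyI hatom
  · exact absurd hx₀ hyI
  · obtain ⟨K, hK⟩ := h.neg.moderators_bddAbove_of_atom_right (C := C) (x₀ := -x₀) (y := -y)
      (by simpa [domain_neg] using hx₀) (by linarith) (by simpa [domain_neg] using hyI)
      (by simpa [Measure.neg_apply] using hatom)
    exact ⟨K, fun χ hχ => by simpa using hK _ hχ.neg⟩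

theorem measure_Ioi_eq_zero (h : IrreducibleOrder μ ν) {y : ℝ} (hx₀ : x₀ ∈ domain μ ν)
    (hxy : x₀ < y) (hy : y ∉ domain μ ν) : ν (Ioi y) = 0 := by
  have hμ : ∫ z, max (z - y) 0 ∂μ = 0 := by
    refine (integral_posPart_sub_eq_zero_iff h.integrable_id_left y).2 (measure_mono_null ?_
      (ae_iff.1 h.ae_mem_domain))
    exact fun z hyz hz => (h.lt_of_notMem_domain hx₀ hxy hy hz).not_gt hyz
  have hgap := h.convexOrder.gap_posPart_sub h.integrable_id y
  have hpot : potential ν y ≤ potential μ y := not_lt.1 hy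
  rw [gap, hμ] at hgap
  refine (integral_posPart_sub_eq_zero_iff h.integrable_id y).1 (le_antisymm (by linarith) ?_)
  exact integral_nonneg fun z => le_max_right _ _

theorem measure_Ioi_ne_zero (h : IrreducibleOrder μ ν) {x : ℝ} (hx : x ∈ domain μ ν) :
    ν (Ioi x) ≠ 0 := fun h0 => by
  have hgap := h.convexOrder.gap_posPart_sub h.integrable_id x
  have hpot : potential μ x < potential ν x := hx
  rw [gap, (integral_posPart_sub_eq_zero_iff h.integrable_id x).2 h0] at hgap
  linarith [show 0 ≤ ∫ z, max (z - x) 0 ∂μ from integral_nonneg fun z => le_max_right _ _]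

theorem measure_Iio_ne_zero (h : IrreducibleOrder μ ν) {x : ℝ} (hx : x ∈ domain μ ν) :
    ν (Iio x) ≠ 0 := by
  simpa [Measure.neg_apply] using
    h.neg.measure_Ioi_ne_zero (x := -x) (by simpa [domain_neg] using hx)

theorem measure_right_complement_eq_zero (h : IrreducibleOrder μ ν) (hx₀ : x₀ ∈ domain μ ν) :
    ν {y | x₀ < y ∧ y ∉ domain μ ν ∧ ν {y} = 0} = 0 := by
  refine measure_eq_zero_of_forall_measure_Ici fun y hy => ?_
  rw [← Ioi_insert, ← union_singleton]
  exact measure_union_null (h.measure_Ioi_eq_zero hx₀ hy.1 hy.2.1) hy.2.2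

theorem ae_mem_domain_or_atom (h : IrreducibleOrder μ ν) :
    ∀ᵐ y ∂ν, y ∈ domain μ ν ∨ ν {y} ≠ 0 := by
  obtain ⟨x₀, hx₀⟩ := h.isConnected_domain.nonempty
  have hright := h.measure_right_complement_eq_zero hx₀
  have hleft := h.neg.measure_right_complement_eq_zero (x₀ := -x₀)
    (by simpa [domain_neg] using hx₀)
  rw [Measure.neg_apply] at hleft
  refine measure_mono_null (fun y hy => ?_) (measure_union_null hright hleft)
  obtain ⟨hyI, hatom⟩ : y ∉ domain μ ν ∧ ν {y} = 0 := by simpa [not_or] using hy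
  rcases lt_trichotomy x₀ y with hlt | rfl | hlt
  · exact .inl ⟨hlt, hyI, hatom⟩
  · exact absurd hx₀ hyI
  · exact .inr ⟨neg_lt_neg hlt, by simpa [domain_neg] using hyI,
      by simpa [Measure.neg_apply] using hatom⟩

end IrreducibleOrder
end Moderator

/-! ### Almost everywhere convergent selections from nested convex sets -/

section AlmostEverywhere
variable {Ω : Type*} [MeasurableSpace Ω] {P : Measure Ω} {f : ℕ → Ω → ℝ}

theorem ae_tendsto_zero_of_summable_integral (hnonneg : ∀ n ω, 0 ≤ f n ω)
    (hint : ∀ n, Integrable (f n) P) (hsum : Summable fun n => ∫ ω, f n ω ∂P) :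
    ∀ᵐ ω ∂P, Tendsto (fun n => f n ω) atTop (𝓝 0) := by
  have hmeas : ∀ n, AEMeasurable (fun ω => ENNReal.ofReal (f n ω)) P :=
    fun n => (hint n).aemeasurable.ennreal_ofReal
  have hfin : ∫⁻ ω, ∑' n, ENNReal.ofReal (f n ω) ∂P ≠ ∞ := by
    rw [lintegral_tsum hmeas]
    simp_rw [← ofReal_integral_eq_lintegral_ofReal (hint _) (.of_forall (hnonneg _))]
    exact hsum.tsum_ofReal_ne_top
  filter_upwards [ae_lt_top' (AEMeasurable.tsum hmeas) hfin] with ω hω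
  have hlim := (ENNReal.tendsto_toReal ENNReal.zero_ne_top).comp
    (ENNReal.tendsto_atTop_zero_of_tsum_ne_top hω.ne)
  exact hlim.congr fun n => ENNReal.toReal_ofReal (hnonneg n ω)

theorem lintegral_liminf_ofReal_le {B : ℝ} (hmeas : ∀ n, Measurable (f n))
    (hnonneg : ∀ n ω, 0 ≤ f n ω) (hint : ∀ n, Integrable (f n) P) (hB : ∀ n, ∫ ω, f n ω ∂P ≤ B) :
    ∫⁻ ω, liminf (fun n => ENNReal.ofReal (f n ω)) atTop ∂P ≤ ENNReal.ofReal B := by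
  refine (lintegral_liminf_le fun n => (hmeas n).ennreal_ofReal).trans
    (liminf_le_of_le (by isBoundedDefault) fun b hb => ?_)
  obtain ⟨n, hn⟩ := hb.exists
  rw [← ofReal_integral_eq_lintegral_ofReal (hint n) (.of_forall (hnonneg n))] at hn
  exact hn.trans (ENNReal.ofReal_le_ofReal (hB n))

theorem ae_not_tendsto_atTop_of_integral_le {B : ℝ} (hmeas : ∀ n, Measurable (f n))
    (hnonneg : ∀ n ω, 0 ≤ f n ω) (hint : ∀ n, Integrable (f n) P) (hB : ∀ n, ∫ ω, f n ω ∂P ≤ B) :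
    ∀ᵐ ω ∂P, ¬ Tendsto (fun n => f n ω) atTop atTop := by
  filter_upwards [ae_lt_top (.liminf fun n => (hmeas n).ennreal_ofReal) (ne_top_of_le_ne_top
    ENNReal.ofReal_ne_top (lintegral_liminf_ofReal_le hmeas hnonneg hint hB))] with ω hω htop
  exact hω.ne (ENNReal.tendsto_ofReal_atTop.comp htop).liminf_eq

theorem integrable_of_tendsto_of_integral_le {B : ℝ} {g : Ω → ℝ} (hmeas : ∀ n, Measurable (f n))
    (hnonneg : ∀ n ω, 0 ≤ f n ω) (hint : ∀ n, Integrable (f n) P) (hB : ∀ n, ∫ ω, f n ω ∂P ≤ B)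
    (hlim : ∀ ω, Tendsto (fun n => f n ω) atTop (𝓝 (g ω))) : Integrable g P := by
  have hg_nonneg : ∀ ω, 0 ≤ g ω := fun ω => ge_of_tendsto' (hlim ω) fun n => hnonneg n ω
  have hg : ∀ ω, ENNReal.ofReal (g ω) = liminf (fun n => ENNReal.ofReal (f n ω)) atTop :=
    fun ω => ((ENNReal.continuous_ofReal.tendsto _).comp (hlim ω)).liminf_eq.symm
  refine ⟨(measurable_of_tendsto_metrizable hmeas (tendsto_pi_nhds.2 hlim)).aestronglyMeasurable,
    (hasFiniteIntegral_iff_ofReal (.of_forall hg_nonneg)).2 ?_⟩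
  simp_rw [hg]
  exact (lintegral_liminf_ofReal_le hmeas hnonneg hint hB).trans_lt ENNReal.ofReal_lt_top

theorem ae_tendsto_of_integral_sq_sub_lt (hint : ∀ n, MemLp (f n) 2 P)
    (hcauchy : ∀ N n m, N ≤ n → N ≤ m → ∫ ω, (f n ω - f m ω) ^ 2 ∂P < (1 / 4) ^ N) :
    ∀ᵐ ω ∂P, ∃ l, Tendsto (fun n => f n ω) atTop (𝓝 l) := by
  refine Lp.ae_tendsto_of_cauchy_eLpNorm (p := 2) (B := fun N => ENNReal.ofReal ((1 / 2) ^ N))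
    (fun n => (hint n).aestronglyMeasurable) (by norm_num)
    summable_geometric_two.tsum_ofReal_ne_top fun N n m hn hm => ?_
  rw [((hint n).sub (hint m)).eLpNorm_eq_integral_rpow_norm (by norm_num) (by norm_num)]
  refine (ENNReal.ofReal_lt_ofReal_iff (by positivity)).2 ?_
  have hsqrt : (∫ ω, (f n ω - f m ω) ^ 2 ∂P) ^ (2 : ℝ)⁻¹ < (1 / 2) ^ N := by
    rw [← one_div, ← Real.sqrt_eq_rpow, Real.sqrt_lt' (by positivity), ← pow_mul, mul_comm, pow_mul]
    norm_num at hcauchy ⊢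
    exact hcauchy N n m hn hm
  simpa using hsqrt

end AlmostEverywhere

theorem exists_almost_minimizing_seq {E : Type*} {D : ℕ → Set E} (hanti : Antitone D)
    (hne : ∀ n, (D n).Nonempty) {J : E → ℝ} {M : ℝ} (hnonneg : ∀ a ∈ D 0, 0 ≤ J a)
    (hle : ∀ a ∈ D 0, J a ≤ M) {ε : ℕ → ℝ} (hε : ∀ n, 0 < ε n) (hε_anti : Antitone ε) :
    ∃ (a : ℕ → E) (k : ℕ → ℕ), StrictMono k ∧ (∀ n, a n ∈ D (k n)) ∧
      ∀ N n, N ≤ n → ∀ z ∈ D (k N), J (a n) < J z + ε N := by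
  have hsub : ∀ n, D n ⊆ D 0 := fun n => hanti n.zero_le
  set d : ℕ → ℝ := fun n => sInf (J '' D n)
  have hbelow : ∀ n, BddBelow (J '' D n) :=
    fun n => ⟨0, forall_mem_image.2 fun a ha => hnonneg a (hsub n ha)⟩
  have hd_le : ∀ {n}, ∀ z ∈ D n, d n ≤ J z := fun z hz =>
    csInf_le (hbelow _) (mem_image_of_mem J hz)
  have hd_mono : Monotone d := fun n m hnm =>
    csInf_le_csInf (hbelow n) ((hne m).image J) (image_mono (hanti hnm))
  have hd_bdd : BddAbove (range d) := by
    refine ⟨M, forall_mem_range.2 fun n => ?_⟩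
    obtain ⟨z, hz⟩ := hne n
    exact (hd_le z hz).trans (hle z (hsub n hz))
  obtain ⟨k, hk, hdk⟩ := extraction_forall_of_eventually
    (P := fun N j => (⨆ n, d n) - ε N / 2 < d j) fun N =>
      (tendsto_atTop_ciSup hd_mono hd_bdd).eventually_const_lt (by linarith [hε N])
  have hexists : ∀ n, ∃ z ∈ D (k n), J z < d (k n) + ε n / 2 := fun n => by
    simpa using exists_lt_of_csInf_lt ((hne (k n)).image J)
      (show sInf (J '' D (k n)) < d (k n) + ε n / 2 by linarith [hε n])
  choose a ha hJa using hexists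
  refine ⟨a, k, hk, ha, fun N n hNn z hz => ?_⟩
  linarith [hJa n, hdk N, hd_le z hz, le_ciSup hd_bdd (k n), hε_anti hNn]

theorem exists_tendsto_or_tendsto_atTop_of_tendsto_exp {t : ℕ → ℝ} {l : ℝ}
    (h : Tendsto (fun n => Real.exp (-t n / 2)) atTop (𝓝 l)) :
    (∃ m, Tendsto t atTop (𝓝 m)) ∨ Tendsto t atTop atTop := by
  obtain rfl | hl := eq_or_ne l 0
  · right
    have hlim := (tendsto_neg_atBot_atTop.comp
      (Real.tendsto_exp_comp_nhds_zero.1 h)).const_mul_atTop (r := 2) (by norm_num)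
    exact hlim.congr fun n => by simp only [Function.comp]; ring
  · exact .inl ⟨-2 * Real.log l, ((h.log hl).const_mul (-2)).congr fun n => by
      rw [Real.log_exp]; ring⟩

section Selection
variable {E Ω : Type*} [AddCommGroup E] [Module ℝ E] [MeasurableSpace Ω] {P : Measure Ω}
  [IsFiniteMeasure P] {D : ℕ → Set E}

theorem integrable_exp_neg_of_nonneg {t : Ω → ℝ} (ht : Measurable t) (hnonneg : 0 ≤ t) :
    Integrable (fun ω => Real.exp (-t ω)) P :=
  .of_bound (C := 1) ht.neg.exp.aestronglyMeasurable <| .of_forall fun ω => by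
    simpa using hnonneg ω

theorem integral_sq_sub_exp_neg_half {s t : Ω → ℝ} (hs : Measurable s) (hs0 : 0 ≤ s)
    (ht : Measurable t) (ht0 : 0 ≤ t) :
    ∫ ω, (Real.exp (-s ω / 2) - Real.exp (-t ω / 2)) ^ 2 ∂P =
      ∫ ω, Real.exp (-s ω) ∂P + ∫ ω, Real.exp (-t ω) ∂P
        - 2 * ∫ ω, Real.exp (-midpoint ℝ s t ω) ∂P := by
  have hmid : ∀ ω, midpoint ℝ s t ω = (s ω + t ω) / 2 := fun ω => by
    simp only [midpoint_eq_smul_add, Pi.smul_apply, Pi.add_apply, smul_eq_mul, invOf_eq_inv]; ring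
  have hmid_int : Integrable (fun ω => Real.exp (-midpoint ℝ s t ω)) P := by
    simp_rw [hmid]
    exact integrable_exp_neg_of_nonneg (by fun_prop)
      fun ω => by have := hs0 ω; have := ht0 ω; simp only [Pi.zero_apply] at *; positivity
  have hs_int := integrable_exp_neg_of_nonneg (P := P) hs hs0
  have ht_int := integrable_exp_neg_of_nonneg (P := P) ht ht0
  rw [← integral_const_mul, ← integral_add hs_int ht_int,
    ← integral_sub (hs_int.fun_add ht_int) (hmid_int.const_mul 2)]
  refine integral_congr_ae (.of_forall fun ω => ?_)
  have hsq : ∀ r : ℝ, Real.exp (-r) = Real.exp (-r / 2) ^ 2 := fun r => by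
    rw [← Real.exp_nat_mul]; push_cast; ring_nf
  have hprod : Real.exp (-midpoint ℝ s t ω) = Real.exp (-s ω / 2) * Real.exp (-t ω / 2) := by
    rw [hmid, ← Real.exp_add]; ring_nf
  simp only [hprod, hsq (s ω), hsq (t ω)]
  ring

/-- Since `exp (-·)` is strictly convex, almost minimising
`∫ exp (-T a)` over the nested convex sets forces `exp (-T (a n) / 2)` to be Cauchy in `L²`. -/
theorem exists_ae_tendsto_or_tendsto_atTop (hanti : Antitone D) (hne : ∀ n, (D n).Nonempty)
    (hconv : ∀ n, Convex ℝ (D n)) (T : E →ₗ[ℝ] Ω → ℝ) (hmeas : ∀ a ∈ D 0, Measurable (T a))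
    (hnonneg : ∀ a ∈ D 0, 0 ≤ T a) :
    ∃ a : ℕ → E, (∀ n, a n ∈ D n) ∧ ∀ᵐ ω ∂P,
      (∃ l, Tendsto (fun n => T (a n) ω) atTop (𝓝 l)) ∨
        Tendsto (fun n => T (a n) ω) atTop atTop := by
  have hint : ∀ a ∈ D 0, Integrable (fun ω => Real.exp (-T a ω)) P :=
    fun a ha => integrable_exp_neg_of_nonneg (hmeas a ha) (hnonneg a ha)
  obtain ⟨a, k, hk, hak, hmin⟩ := exists_almost_minimizing_seq hanti hne
    (J := fun a => ∫ ω, Real.exp (-T a ω) ∂P) (M := ∫ _, 1 ∂P)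
    (fun a _ => integral_nonneg fun ω => (Real.exp_pos _).le)
    (fun a ha => integral_mono (hint a ha) (integrable_const 1) fun ω => by
      simpa using hnonneg a ha ω)
    (ε := fun n => (1 / 4) ^ n / 2) (fun n => by positivity)
    (fun n m hnm => div_le_div_of_nonneg_right
      (pow_le_pow_of_le_one (by norm_num) (by norm_num) hnm) (by norm_num))
  have ha0 : ∀ n, a n ∈ D 0 := fun n => hanti (k n).zero_le (hak n)
  refine ⟨a, fun n => hanti (hk.id_le n) (hak n), ?_⟩
  have hae := ae_tendsto_of_integral_sq_sub_lt (P := P)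
    (f := fun n ω => Real.exp (-T (a n) ω / 2)) (fun n => ?_) fun N n m hn hm => ?_
  · filter_upwards [hae] with ω ⟨l, hl⟩
    exact exists_tendsto_or_tendsto_atTop_of_tendsto_exp hl
  · refine .of_bound ((hmeas _ (ha0 n)).neg.div_const 2).exp.aestronglyMeasurable 1
      (.of_forall fun ω => ?_)
    have := hnonneg _ (ha0 n) ω
    simp only [Pi.zero_apply, Real.norm_eq_abs, Real.abs_exp, Real.exp_le_one_iff] at *
    linarith
  · have hz := (hconv (k N)).midpoint_mem (hanti (hk.monotone hn) (hak n))
      (hanti (hk.monotone hm) (hak m))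
    have hTz : T (midpoint ℝ (a n) (a m)) = midpoint ℝ (T (a n)) (T (a m)) :=
      T.toAffineMap.map_midpoint _ _
    rw [integral_sq_sub_exp_neg_half (hmeas _ (ha0 n)) (hnonneg _ (ha0 n)) (hmeas _ (ha0 m))
      (hnonneg _ (ha0 m)), ← hTz]
    linarith [hmin N n hn _ hz, hmin N m hm _ hz]

theorem exists_ae_tendsto_or_tendsto_atTop_pi {ι : Type*} [Finite ι] (hanti : Antitone D)
    (hne : ∀ n, (D n).Nonempty) (hconv : ∀ n, Convex ℝ (D n)) (T : ι → E →ₗ[ℝ] Ω → ℝ)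
    (hmeas : ∀ a ∈ D 0, ∀ i, Measurable (T i a)) (hnonneg : ∀ a ∈ D 0, ∀ i, 0 ≤ T i a) :
    ∃ a : ℕ → E, (∀ n, a n ∈ D n) ∧ ∀ i, ∀ᵐ ω ∂P,
      (∃ l, Tendsto (fun n => T i (a n) ω) atTop (𝓝 l)) ∨
        Tendsto (fun n => T i (a n) ω) atTop atTop := by
  let _ := Fintype.ofFinite ι
  let _ : MeasurableSpace ι := ⊤
  let T' : E →ₗ[ℝ] ι × Ω → ℝ := LinearMap.pi fun p => LinearMap.proj p.2 ∘ₗ T p.1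
  obtain ⟨a, ha, hlim⟩ := exists_ae_tendsto_or_tendsto_atTop
    (P := (Measure.count : Measure ι).prod P) hanti hne hconv T'
    (fun a ha => measurable_from_prod_countable_right fun i => hmeas a ha i)
    (fun a ha p => hnonneg a ha p.1 p.2)
  exact ⟨a, ha, Measure.ae_count_iff.1 (Measure.ae_ae_of_ae_prod hlim)⟩

end Selection

/-! ### Positive functionals attaining a superreplication value -/

section PositiveExtension
variable {A V : Type*} [AddCommGroup A] [Module ℝ A] [AddCommGroup V] [Module ℝ V]

theorem exists_linearMap_le_sublinear_eq {N : V → ℝ}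
    (hsmul : ∀ r : ℝ, 0 < r → ∀ f, N (r • f) = r * N f)
    (hadd : ∀ f g, N (f + g) ≤ N f + N g) (c : V) :
    ∃ Λ : V →ₗ[ℝ] ℝ, Λ c = N c ∧ ∀ f, Λ f ≤ N f := by
  have hzero : N 0 = 0 := by
    have := hsmul 2 two_pos 0
    rw [smul_zero] at this
    linarith
  have hspan : ∀ r : ℝ, r • c = 0 → r • N c = 0 := fun r hr => by
    rcases smul_eq_zero.1 hr with rfl | rfl
    · simp
    · simp [hzero]
  have hle : ∀ r : ℝ, r * N c ≤ N (r • c) := fun r => by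
    rcases lt_trichotomy r 0 with hr | rfl | hr
    · have hsum := hadd (r • c) (-r • c)
      rw [← add_smul, add_neg_cancel, zero_smul, hzero, hsmul (-r) (neg_pos.2 hr)] at hsum
      linarith
    · simp [hzero]
    · exact (hsmul r hr c).ge
  obtain ⟨Λ, hΛ, hΛN⟩ := exists_extension_of_le_sublinear
    (LinearPMap.mkSpanSingleton' c (N c) hspan) N hsmul hadd <| by
      rintro ⟨x, hx⟩
      obtain ⟨r, rfl⟩ := Submodule.mem_span_singleton.1 hx
      rw [LinearPMap.mkSpanSingleton'_apply]
      exact hle r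
  refine ⟨Λ, ?_, hΛN⟩
  exact (hΛ ⟨c, Submodule.mem_span_singleton_self c⟩).trans
    (LinearPMap.mkSpanSingleton'_apply_self ..)

variable [PartialOrder V]

/-- The superreplication price of `f`: the least price `k a` of an `a` whose payoff `T a`
dominates `f`. -/
def superPrice (T : A →ₗ[ℝ] V) (k : A →ₗ[ℝ] ℝ) (f : V) : ℝ := sInf (k '' {a | f ≤ T a})

variable {T : A →ₗ[ℝ] V} {k : A →ₗ[ℝ] ℝ} [IsOrderedAddMonoid V]

theorem isGLB_superPrice (hdom : ∀ f, ∃ a, f ≤ T a) (hpos : ∀ a, 0 ≤ T a → 0 ≤ k a) (f : V) :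
    IsGLB (k '' {a | f ≤ T a}) (superPrice T k f) := by
  refine isGLB_csInf (Set.Nonempty.image k (hdom f)) ?_
  obtain ⟨b, hb⟩ := hdom (-f)
  refine ⟨-k b, forall_mem_image.2 fun a ha => ?_⟩
  have hab := hpos (a + b) (by simpa using add_le_add ha hb)
  rw [map_add] at hab
  linarith

theorem superPrice_le (hdom : ∀ f, ∃ a, f ≤ T a) (hpos : ∀ a, 0 ≤ T a → 0 ≤ k a) {f : V} {a : A}
    (ha : f ≤ T a) : superPrice T k f ≤ k a :=
  (isGLB_superPrice hdom hpos f).1 (mem_image_of_mem k ha)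

theorem superPrice_add_le (hdom : ∀ f, ∃ a, f ≤ T a) (hpos : ∀ a, 0 ≤ T a → 0 ≤ k a) (f g : V) :
    superPrice T k (f + g) ≤ superPrice T k f + superPrice T k g := by
  refine le_of_forall_pos_le_add fun ε hε => ?_
  obtain ⟨_, ⟨a, ha, rfl⟩, -, hka⟩ :=
    (isGLB_superPrice hdom hpos f).exists_between (lt_add_of_pos_right _ (half_pos hε))
  obtain ⟨_, ⟨b, hb, rfl⟩, -, hkb⟩ :=
    (isGLB_superPrice hdom hpos g).exists_between (lt_add_of_pos_right _ (half_pos hε))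
  have hab := superPrice_le hdom hpos (a := a + b)
    ((add_le_add ha hb).trans_eq (map_add T a b).symm)
  rw [map_add] at hab
  linarith

theorem superPrice_smul [PosSMulMono ℝ V] (hdom : ∀ f, ∃ a, f ≤ T a)
    (hpos : ∀ a, 0 ≤ T a → 0 ≤ k a) {r : ℝ} (hr : 0 < r) (f : V) :
    superPrice T k (r • f) = r * superPrice T k f := by
  have hle : ∀ {r : ℝ}, 0 < r → ∀ f, r * superPrice T k f ≤ superPrice T k (r • f) := by
    refine fun {r} hr f => (isGLB_superPrice hdom hpos _).2 (forall_mem_image.2 fun a ha => ?_)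
    have hinv := smul_le_smul_of_nonneg_left (show r • f ≤ T a from ha) (inv_nonneg.2 hr.le)
    rw [inv_smul_smul₀ hr.ne', ← map_smul] at hinv
    have := superPrice_le hdom hpos hinv
    rwa [map_smul, smul_eq_mul, ← div_eq_inv_mul, le_div_iff₀' hr] at this
  refine le_antisymm ?_ (hle hr f)
  have := hle (inv_pos.2 hr) (r • f)
  rwa [inv_smul_smul₀ hr.ne', ← div_eq_inv_mul, div_le_iff₀' hr] at this

theorem exists_positive_linearMap_attaining_superPrice [PosSMulMono ℝ V]
    (hdom : ∀ f, ∃ a, f ≤ T a) (hpos : ∀ a, 0 ≤ T a → 0 ≤ k a) (c : V) :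
    ∃ Λ : V →ₗ[ℝ] ℝ, (∀ f, 0 ≤ f → 0 ≤ Λ f) ∧ (∀ a, Λ (T a) = k a) ∧
      IsGLB (k '' {a | c ≤ T a}) (Λ c) := by
  obtain ⟨Λ, hc, hΛ⟩ := exists_linearMap_le_sublinear_eq (N := superPrice T k)
    (fun r hr => superPrice_smul hdom hpos hr) (superPrice_add_le hdom hpos) c
  have hle : ∀ {f a}, f ≤ T a → Λ f ≤ k a := fun h => (hΛ _).trans (superPrice_le hdom hpos h)
  refine ⟨Λ, fun f hf => ?_, fun a => le_antisymm (hle le_rfl) ?_,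
    hc ▸ isGLB_superPrice hdom hpos c⟩
  · have := hle (f := -f) (a := 0) (by simpa using hf)
    simp only [map_neg, map_zero] at this
    linarith
  · have := hle (f := -T a) (a := -a) (by rw [map_neg])
    simp only [map_neg] at this
    linarith

end PositiveExtension

/-! ### Functionals represented by measures -/

/-- The space of continuous functions on the line that are integrable for `ξ`. -/
def IntegrableC (ξ : Measure ℝ) : Submodule ℝ C(ℝ, ℝ) where
  carrier := {f | Integrable f ξ}
  zero_mem' := integrable_zero _ _ _
  add_mem' := Integrable.add
  smul_mem' r _ hf := hf.smul r

/-- The space of continuous functions on the plane dominated by a sum of two continuous functions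
of one variable, integrable for `μ` and `ν` respectively: the costs allowed by Assumption [A']. -/
def DominatedC (μ ν : Measure ℝ) : Submodule ℝ C(ℝ × ℝ, ℝ) where
  carrier := {f | ∃ a ∈ IntegrableC μ, ∃ b ∈ IntegrableC ν, ∀ p, |f p| ≤ a p.1 + b p.2}
  zero_mem' := ⟨0, zero_mem _, 0, zero_mem _, by simp⟩
  add_mem' := by
    rintro f g ⟨a, ha, b, hb, hf⟩ ⟨a', ha', b', hb', hg⟩
    refine ⟨a + a', add_mem ha ha', b + b', add_mem hb hb', fun p => ?_⟩
    calc |f p + g p| ≤ |f p| + |g p| := abs_add_le _ _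
      _ ≤ a p.1 + b p.2 + (a' p.1 + b' p.2) := add_le_add (hf p) (hg p)
      _ = (a + a') p.1 + (b + b') p.2 := add_add_add_comm ..
  smul_mem' := by
    rintro r f ⟨a, ha, b, hb, hf⟩
    refine ⟨|r| • a, Submodule.smul_mem _ _ ha, |r| • b, Submodule.smul_mem _ _ hb, fun p => ?_⟩
    calc |r * f p| = |r| * |f p| := abs_mul r _
      _ ≤ |r| * (a p.1 + b p.2) := by gcongr; exact hf p
      _ = (|r| • a) p.1 + (|r| • b) p.2 := mul_add ..

section Representation
variable {μ ν : Measure ℝ}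

theorem DominatedC.of_abs_le {f g : C(ℝ × ℝ, ℝ)} (hg : g ∈ DominatedC μ ν)
    (h : ∀ p, |f p| ≤ |g p|) : f ∈ DominatedC μ ν := by
  obtain ⟨a, ha, b, hb, hab⟩ := hg
  exact ⟨a, ha, b, hb, fun p => (h p).trans (hab p)⟩

theorem DominatedC.of_bounded [IsFiniteMeasure μ] {f : C(ℝ × ℝ, ℝ)} {M : ℝ} (h : ∀ p, |f p| ≤ M) :
    f ∈ DominatedC μ ν :=
  ⟨.const ℝ M, integrable_const M, 0, zero_mem _, fun p => by simpa using h p⟩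

theorem DominatedC.exists_nonneg_bound {f : C(ℝ × ℝ, ℝ)} (hf : f ∈ DominatedC μ ν) :
    ∃ a ∈ IntegrableC μ, ∃ b ∈ IntegrableC ν, 0 ≤ a ∧ 0 ≤ b ∧ ∀ p, |f p| ≤ a p.1 + b p.2 := by
  obtain ⟨a, ha, b, hb, hab⟩ := hf
  exact ⟨|a|, ha.abs, |b|, hb.abs, abs_nonneg a, abs_nonneg b,
    fun p => (hab p).trans (add_le_add (le_abs_self _) (le_abs_self _))⟩

/-- A sequence of nonnegative continuous functions whose integrals tend to zero. -/
structure VanishesInMean (ξ : Measure ℝ) (a : ℕ → C(ℝ, ℝ)) : Prop where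
  nonneg : ∀ n, 0 ≤ a n
  mem : ∀ n, a n ∈ IntegrableC ξ
  tendsto : Tendsto (fun n => ∫ x, a n x ∂ξ) atTop (𝓝 0)

theorem VanishesInMean.of_le {ξ : Measure ℝ} {a : ℕ → C(ℝ, ℝ)} {g : ℝ → ℝ}
    (hg : Integrable g ξ) (hnonneg : ∀ n x, 0 ≤ a n x) (hle : ∀ n x, a n x ≤ g x)
    (hlim : ∀ x, Tendsto (fun n => a n x) atTop (𝓝 0)) : VanishesInMean ξ a where
  nonneg := hnonneg
  mem n := hg.mono' (a n).continuous.aestronglyMeasurable <| .of_forall fun x => by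
    rw [Real.norm_of_nonneg (hnonneg n x)]; exact hle n x
  tendsto := by
    simpa using tendsto_integral_of_dominated_convergence (f := fun _ => 0) g
      (fun n => (a n).continuous.aestronglyMeasurable) hg
      (fun n => .of_forall fun x => by rw [Real.norm_of_nonneg (hnonneg n x)]; exact hle n x)
      (.of_forall hlim)

/-- A functional bounded above by the marginal integrals of any dominating sum. -/
def IsMarginalBounded (Λ : DominatedC μ ν →ₗ[ℝ] ℝ) : Prop :=
  ∀ f : DominatedC μ ν, ∀ a ∈ IntegrableC μ, ∀ b ∈ IntegrableC ν, 0 ≤ a → 0 ≤ b →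
    (∀ p, f.1 p ≤ a p.1 + b p.2) → Λ f ≤ ∫ x, a x ∂μ + ∫ y, b y ∂ν

/-- The value of `Λ` at `f` is the integral of `f` against `γ`. -/
def IsRepresented (Λ : DominatedC μ ν →ₗ[ℝ] ℝ) (γ : Measure (ℝ × ℝ)) (f : DominatedC μ ν) : Prop :=
  Integrable f.1 γ ∧ ∫ p, f.1 p ∂γ = Λ f

variable {Λ : DominatedC μ ν →ₗ[ℝ] ℝ} {γ : Measure (ℝ × ℝ)}

theorem IsMarginalBounded.nonneg (hΛ : IsMarginalBounded Λ) {f : DominatedC μ ν}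
    (hf : ∀ p, 0 ≤ f.1 p) : 0 ≤ Λ f := by
  have := hΛ (-f) 0 (zero_mem _) 0 (zero_mem _) le_rfl le_rfl (fun p => by simpa using hf p)
  simpa using this

theorem IsRepresented.sub {f g : DominatedC μ ν} (hf : IsRepresented Λ γ f)
    (hg : IsRepresented Λ γ g) : IsRepresented Λ γ (f - g) :=
  ⟨hf.1.sub hg.1, by rw [map_sub, ← hf.2, ← hg.2]; exact integral_sub hf.1 hg.1⟩

theorem IsMarginalBounded.isRepresented_of_tendsto (hΛ : IsMarginalBounded Λ)
    {F : ℕ → DominatedC μ ν} {f : DominatedC μ ν} {a b : ℕ → C(ℝ, ℝ)}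
    (hF : ∀ n, IsRepresented Λ γ (F n)) (hnonneg : ∀ n p, 0 ≤ (F n).1 p)
    (hle : ∀ n p, (F n).1 p ≤ f.1 p) (hlim : ∀ p, Tendsto (fun n => (F n).1 p) atTop (𝓝 (f.1 p)))
    (ha : VanishesInMean μ a) (hb : VanishesInMean ν b)
    (hrem : ∀ n p, f.1 p - (F n).1 p ≤ a n p.1 + b n p.2) : IsRepresented Λ γ f := by
  have hΛ_le : ∀ n, Λ (F n) ≤ Λ f := fun n => by
    simpa using hΛ.nonneg (f := f - F n) fun p => sub_nonneg.2 (hle n p)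
  have hΛ_rem : ∀ n, Λ f - Λ (F n) ≤ ∫ x, a n x ∂μ + ∫ y, b n y ∂ν := fun n => by
    rw [← map_sub]
    exact hΛ _ _ (ha.mem n) _ (hb.mem n) (ha.nonneg n) (hb.nonneg n) (hrem n)
  have hint : Integrable f.1 γ :=
    integrable_of_tendsto_of_integral_le (fun n => (F n).1.continuous.measurable) hnonneg
      (fun n => (hF n).1) (fun n => (hF n).2.trans_le (hΛ_le n)) hlim
  refine ⟨hint, tendsto_nhds_unique (f := fun n => Λ (F n)) (l := atTop) ?_ ?_⟩
  · simp_rw [← (hF _).2]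
    refine tendsto_integral_of_dominated_convergence f.1
      (fun n => (F n).1.continuous.aestronglyMeasurable) hint (fun n => .of_forall fun p => ?_)
      (.of_forall hlim)
    rw [Real.norm_of_nonneg (hnonneg n p)]
    exact hle n p
  · refine tendsto_of_tendsto_of_tendsto_of_le_of_le (g := fun n => Λ f -
      (∫ x, a n x ∂μ + ∫ y, b n y ∂ν)) ?_ tendsto_const_nhds (fun n => ?_) hΛ_le
    · simpa using (ha.tendsto.add hb.tendsto).const_sub (Λ f)
    · linarith [hΛ_rem n]

/-- The continuous cutoff equal to `1` on `[-n, n]` and to `0` outside `[-(n + 1), n + 1]`. -/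
def cutoff (n : ℕ) : C(ℝ, ℝ) := ⟨fun t => max 0 (min 1 (n + 1 - |t|)), by fun_prop⟩

theorem cutoff_nonneg (n : ℕ) (t : ℝ) : 0 ≤ cutoff n t := le_max_left _ _

theorem cutoff_le_one (n : ℕ) (t : ℝ) : cutoff n t ≤ 1 := max_le zero_le_one (min_le_left _ _)

theorem tendsto_cutoff (t : ℝ) : Tendsto (fun n => cutoff n t) atTop (𝓝 1) := by
  obtain ⟨n, hn⟩ := exists_nat_ge |t|
  refine tendsto_const_nhds.congr' ?_
  filter_upwards [eventually_ge_atTop n] with m hm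
  have hm' : (n : ℝ) ≤ m := by exact_mod_cast hm
  simp [cutoff, min_eq_left (show (1 : ℝ) ≤ m + 1 - |t| by linarith)]

theorem hasCompactSupport_cutoff (n : ℕ) : HasCompactSupport (cutoff n) :=
  .intro (isCompact_Icc (a := -((n : ℝ) + 1)) (b := n + 1)) fun t ht => by
    rw [mem_Icc, ← abs_le, not_le] at ht
    exact max_eq_left ((min_le_right _ _).trans (by linarith))

theorem vanishesInMean_one_sub_cutoff (ξ : Measure ℝ) [IsFiniteMeasure ξ] {M : ℝ} (hM : 0 ≤ M) :
    VanishesInMean ξ fun n => M • (1 - cutoff n) :=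
  .of_le (integrable_const M) (fun n x => mul_nonneg hM (sub_nonneg.2 (cutoff_le_one n x)))
    (fun n x => mul_le_of_le_one_right hM (sub_le_self _ (cutoff_nonneg n x)))
    (fun x => by simpa using ((tendsto_cutoff x).const_sub 1).const_mul M)

theorem vanishesInMean_sub_posPart {ξ : Measure ℝ} {a : C(ℝ, ℝ)} (ha : a ∈ IntegrableC ξ)
    (hnonneg : 0 ≤ a) : VanishesInMean ξ fun n => (a - .const ℝ (n / 2 : ℝ)) ⊔ 0 :=
  .of_le (g := a) ha (fun n x => le_max_right _ _)
    (fun n x => max_le (sub_le_self _ (by rw [ContinuousMap.const_apply]; positivity)) (hnonneg x))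
    fun x => by
      obtain ⟨n, hn⟩ := exists_nat_ge (2 * a x)
      refine tendsto_const_nhds.congr' ?_
      filter_upwards [eventually_ge_atTop n] with m hm
      have hm' : (n : ℝ) ≤ m := by exact_mod_cast hm
      exact (max_eq_right (sub_nonpos.2 (by rw [ContinuousMap.const_apply]; linarith))).symm

theorem IsMarginalBounded.isRepresented_of_bounded [IsFiniteMeasure μ] [IsFiniteMeasure ν]
    (hΛ : IsMarginalBounded Λ)
    (hγ : ∀ f : DominatedC μ ν, HasCompactSupport f.1 → IsRepresented Λ γ f)
    {f : DominatedC μ ν} {M : ℝ} (hf : ∀ p, 0 ≤ f.1 p) (hM : ∀ p, f.1 p ≤ M) :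
    IsRepresented Λ γ f := by
  have hM0 : 0 ≤ M := (hf 0).trans (hM 0)
  let χ : ℕ → C(ℝ × ℝ, ℝ) := fun n => (cutoff n).comp .fst * (cutoff n).comp .snd
  have hχ_nonneg : ∀ n p, 0 ≤ χ n p := fun n p =>
    mul_nonneg (cutoff_nonneg n _) (cutoff_nonneg n _)
  have hχ_le : ∀ n p, χ n p ≤ 1 := fun n p =>
    mul_le_one₀ (cutoff_le_one n _) (cutoff_nonneg n _) (cutoff_le_one n _)
  have hle : ∀ n p, f.1 p * χ n p ≤ f.1 p := fun n p => mul_le_of_le_one_right (hf p) (hχ_le n p)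
  have hmem : ∀ n, f.1 * χ n ∈ DominatedC μ ν := fun n => DominatedC.of_abs_le f.2 fun p => by
    rw [abs_of_nonneg (hf p)]
    exact abs_le.2 ⟨(neg_nonpos.2 (hf p)).trans (mul_nonneg (hf p) (hχ_nonneg n p)), hle n p⟩
  refine hΛ.isRepresented_of_tendsto (F := fun n => ⟨f.1 * χ n, hmem n⟩) (fun n => hγ _ ?_)
    (fun n p => mul_nonneg (hf p) (hχ_nonneg n p)) hle (fun p => ?_)
    (vanishesInMean_one_sub_cutoff μ hM0) (vanishesInMean_one_sub_cutoff ν hM0) fun n p => ?_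
  · exact HasCompactSupport.mul_left <| .of_support_subset_isCompact
      ((hasCompactSupport_cutoff n).prod (hasCompactSupport_cutoff n)) fun p hp => by
        obtain ⟨h1, h2⟩ := mul_ne_zero_iff.1 hp
        exact ⟨subset_tsupport _ h1, subset_tsupport _ h2⟩
  · simpa [χ] using ((tendsto_cutoff p.1).mul (tendsto_cutoff p.2)).const_mul (f.1 p)
  · have h1 := mul_nonneg (sub_nonneg.2 (cutoff_le_one n p.1)) (sub_nonneg.2 (cutoff_le_one n p.2))
    have h2 := mul_le_mul_of_nonneg_right (hM p) (sub_nonneg.2 (hχ_le n p))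
    change f.1 p - f.1 p * (cutoff n p.1 * cutoff n p.2) ≤
      M * (1 - cutoff n p.1) + M * (1 - cutoff n p.2)
    change f.1 p * (1 - cutoff n p.1 * cutoff n p.2) ≤
      M * (1 - cutoff n p.1 * cutoff n p.2) at h2
    linarith [mul_nonneg hM0 h1]

theorem IsMarginalBounded.isRepresented_of_nonneg [IsFiniteMeasure μ] [IsFiniteMeasure ν]
    (hΛ : IsMarginalBounded Λ)
    (hγ : ∀ f : DominatedC μ ν, HasCompactSupport f.1 → IsRepresented Λ γ f)
    {f : DominatedC μ ν} (hf : ∀ p, 0 ≤ f.1 p) : IsRepresented Λ γ f := by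
  obtain ⟨a, ha, b, hb, ha0, hb0, hab⟩ := DominatedC.exists_nonneg_bound f.2
  have hnonneg : ∀ (n : ℕ) p, 0 ≤ min (f.1 p) n := fun n p => le_min (hf p) n.cast_nonneg
  have hmem : ∀ n : ℕ, f.1 ⊓ .const _ (n : ℝ) ∈ DominatedC μ ν := fun n =>
    DominatedC.of_abs_le f.2 fun p => by
      rw [abs_of_nonneg (hf p)]
      exact (abs_of_nonneg (hnonneg n p)).trans_le (min_le_left _ _)
  refine hΛ.isRepresented_of_tendsto (F := fun n => ⟨f.1 ⊓ .const _ (n : ℝ), hmem n⟩)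
    (fun n => hΛ.isRepresented_of_bounded hγ (hnonneg n) fun p => min_le_right _ _) hnonneg
    (fun n p => min_le_left _ _) (fun p => ?_) (vanishesInMean_sub_posPart ha ha0)
    (vanishesInMean_sub_posPart hb hb0) fun n p => ?_
  · obtain ⟨n, hn⟩ := exists_nat_ge (f.1 p)
    refine tendsto_const_nhds.congr' ?_
    filter_upwards [eventually_ge_atTop n] with m hm
    have hm' : (n : ℝ) ≤ m := by exact_mod_cast hm
    exact (min_eq_left (hn.trans hm')).symm
  · have h1 : a p.1 - n / 2 ≤ max (a p.1 - n / 2) 0 := le_max_left _ _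
    have h2 : b p.2 - n / 2 ≤ max (b p.2 - n / 2) 0 := le_max_left _ _
    have h3 : 0 ≤ max (a p.1 - n / 2) 0 := le_max_right _ _
    have h4 : 0 ≤ max (b p.2 - n / 2) 0 := le_max_right _ _
    have h5 := (le_abs_self _).trans (hab p)
    change f.1 p - min (f.1 p) n ≤ max (a p.1 - n / 2) 0 + max (b p.2 - n / 2) 0
    rcases min_cases (f.1 p) n with ⟨h, _⟩ | ⟨h, _⟩ <;> rw [h] <;> linarith

open CompactlySupported in
theorem exists_isRepresented_of_hasCompactSupport [IsFiniteMeasure μ] (hΛ : IsMarginalBounded Λ) :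
    ∃ γ : Measure (ℝ × ℝ), ∀ f : DominatedC μ ν, HasCompactSupport f.1 → IsRepresented Λ γ f := by
  have hmem : ∀ g : C_c(ℝ × ℝ, ℝ), g.toContinuousMap ∈ DominatedC μ ν := fun g => by
    obtain ⟨M, hM⟩ := g.hasCompactSupport.exists_bound_of_continuous g.continuous
    exact DominatedC.of_bounded hM
  let incl : C_c(ℝ × ℝ, ℝ) →ₗ[ℝ] DominatedC μ ν :=
    { toFun := fun g => ⟨g.toContinuousMap, hmem g⟩
      map_add' := fun _ _ => rfl
      map_smul' := fun _ _ => rfl }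
  let Λ' : C_c(ℝ × ℝ, ℝ) →ₚ[ℝ] ℝ :=
    PositiveLinearMap.mk₀ (Λ ∘ₗ incl) fun g hg => hΛ.nonneg fun p => hg p
  exact ⟨RealRMK.rieszMeasure Λ', fun f hf => ⟨f.1.continuous.integrable_of_hasCompactSupport hf,
    RealRMK.integral_rieszMeasure Λ' ⟨f.1, hf⟩⟩⟩

theorem IsMarginalBounded.exists_isRepresented [IsFiniteMeasure μ] [IsFiniteMeasure ν]
    (hΛ : IsMarginalBounded Λ) :
    ∃ γ : Measure (ℝ × ℝ), IsFiniteMeasure γ ∧ ∀ f, IsRepresented Λ γ f := by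
  obtain ⟨γ, hγ⟩ := exists_isRepresented_of_hasCompactSupport hΛ
  refine ⟨γ, ?_, fun f => ?_⟩
  · have hone : (1 : C(ℝ × ℝ, ℝ)) ∈ DominatedC μ ν := DominatedC.of_bounded (M := 1) (by simp)
    have hint : Integrable (fun _ => (1 : ℝ)) γ :=
      (hΛ.isRepresented_of_nonneg hγ (f := ⟨1, hone⟩) fun _ => zero_le_one).1
    exact (integrable_const_iff_isFiniteMeasure one_ne_zero).1 hint
  · have hpos : f.1 ⊔ 0 ∈ DominatedC μ ν := DominatedC.of_abs_le f.2 fun p =>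
      (abs_of_nonneg (le_max_right _ _)).trans_le (max_le (le_abs_self _) (abs_nonneg _))
    have hsub : f = ⟨f.1 ⊔ 0, hpos⟩ - (⟨f.1 ⊔ 0, hpos⟩ - f) := by simp
    rw [hsub]
    refine (hΛ.isRepresented_of_nonneg hγ fun p => le_max_right _ _).sub
      (hΛ.isRepresented_of_nonneg hγ fun p => sub_nonneg.2 (le_max_left _ _))

end Representation

/-! ### Martingale transports -/

section Transport

variable {α β ι : Type*} [MeasurableSpace α] [MeasurableSpace β] [Fintype ι]
  {m : ι → Measure α} {ξ : Measure β} {g : α → β}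

theorem integrable_comp_of_map_sum_eq (hg : Measurable g) (hm : (∑ i, m i).map g = ξ) {f : β → ℝ}
    (hf : Integrable f ξ) (i : ι) : Integrable (fun a => f (g a)) (m i) :=
  integrable_finsetSum_measure.1 ((hm ▸ hf).comp_measurable hg) i (Finset.mem_univ i)

theorem sum_integral_comp_of_map_sum_eq (hg : Measurable g) (hm : (∑ i, m i).map g = ξ) {f : β → ℝ}
    (hf : Integrable f ξ) : ∑ i, ∫ a, f (g a) ∂(m i) = ∫ b, f b ∂ξ := by
  rw [← integral_finsetSum_measure fun i _ => integrable_comp_of_map_sum_eq hg hm hf i]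
  subst hm
  exact (integral_map hg.aemeasurable hf.aestronglyMeasurable).symm

theorem ae_comp_of_map_sum_eq (hg : Measurable g) (hm : (∑ i, m i).map g = ξ) {p : β → Prop}
    (hp : ∀ᵐ b ∂ξ, p b) (i : ι) : ∀ᵐ a ∂(m i), p (g a) :=
  (ae_of_ae_map hg.aemeasurable (hm ▸ hp)).filter_mono <| ae_mono fun s => by
    rw [Measure.finsetSum_apply]
    exact Finset.single_le_sum (f := fun i => m i s) (fun _ _ => zero_le) (Finset.mem_univ i)

theorem IsSubMart.integral_mul_sub_eq_zero {γ : Measure (ℝ × ℝ)} (hγ : IsSubMart γ) {θ : ℝ → ℝ}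
    (hi : Integrable (fun p : ℝ × ℝ => θ p.1 * (p.2 - p.1)) γ) :
    ∫ p, θ p.1 * (p.2 - p.1) ∂γ = 0 := by
  obtain ⟨hfin, rfl | ⟨κ, hκ, hdis, hbary⟩⟩ := hγ
  · simp
  rw [← hdis] at hi ⊢
  rw [Measure.integral_compProd hi]
  refine integral_eq_zero_of_ae ?_
  filter_upwards [hbary] with x hx
  rw [integral_const_mul, integral_sub (f := fun y => y) hx.1 (integrable_const _), hx.2]
  simp

open scoped ContDiff BoundedContinuousFunction in
theorem exists_martingale_disintegration {γ : Measure (ℝ × ℝ)} [IsFiniteMeasure γ]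
    (hfst : Integrable (fun p : ℝ × ℝ => p.1) γ) (hsnd : Integrable (fun p : ℝ × ℝ => p.2) γ)
    (hγ : ∀ θ : ℝ →ᵇ ℝ, ∫ p, θ p.1 * (p.2 - p.1) ∂γ = 0) :
    ∃ κ : Kernel ℝ ℝ, IsMarkovKernel κ ∧ γ.map Prod.fst ⊗ₘ κ = γ ∧
      ∀ᵐ x ∂(γ.map Prod.fst), Integrable id (κ x) ∧ ∫ y, y ∂(κ x) = x := by
  have hsub : Integrable (fun p : ℝ × ℝ => p.2 - p.1) γ := hsnd.sub hfst
  have hbary : ∀ᵐ x ∂γ.fst, ∫ y, (y - x) ∂(γ.condKernel x) = 0 := by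
    refine ae_eq_zero_of_integral_contDiff_smul_eq_zero
      hsub.integral_condKernel.locallyIntegrable fun g hg hgs => ?_
    obtain ⟨M, hM⟩ := hgs.exists_bound_of_continuous hg.continuous
    have hint : Integrable (fun p : ℝ × ℝ => g p.1 * (p.2 - p.1)) γ :=
      hsub.bdd_mul (hg.continuous.comp continuous_fst).aestronglyMeasurable
        (.of_forall fun p => hM p.1)
    have hzero := hγ (.ofNormedAddCommGroup g hg.continuous M hM)
    simp only [BoundedContinuousFunction.coe_ofNormedAddCommGroup] at hzero
    rw [← Measure.integral_condKernel hint] at hzero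
    simpa only [integral_const_mul, smul_eq_mul] using hzero
  refine ⟨γ.condKernel, inferInstance, γ.disintegrate γ.condKernel, ?_⟩
  filter_upwards [hsnd.condKernel_ae, hbary] with x hx hxbary
  rw [integral_sub hx (integrable_const _)] at hxbary
  exact ⟨hx, by simpa [sub_eq_zero] using hxbary⟩

variable {μ ν : Measure ℝ} {L : ℕ} {γ : Fin L → Measure (ℝ × ℝ)}

theorem MLfeasible.map_fst [SFinite μ] (hγ : MLfeasible μ ν γ) :
    (∑ l, γ l).map Prod.fst = μ := by
  obtain ⟨-, κ, ⟨hκ, -, -⟩, hdis⟩ := hγ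
  rw [hdis]
  exact Measure.fst_compProd μ κ

theorem MLfeasible.map_snd (hγ : MLfeasible μ ν γ) : (∑ l, γ l).map Prod.snd = ν := by
  obtain ⟨-, κ, ⟨-, hsnd, -⟩, hdis⟩ := hγ
  rw [hdis, hsnd]

open scoped BoundedContinuousFunction in
theorem MLfeasible.of_integral_eq_zero (hfin : ∀ l, IsFiniteMeasure (γ l))
    (hμ : Integrable id μ) (hν : Integrable id ν)
    (hfst : (∑ l, γ l).map Prod.fst = μ) (hsnd : (∑ l, γ l).map Prod.snd = ν)
    (hγ : ∀ l, ∀ θ : ℝ →ᵇ ℝ, ∫ p, θ p.1 * (p.2 - p.1) ∂(γ l) = 0) : MLfeasible μ ν γ := by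
  have hi₁ := integrable_comp_of_map_sum_eq measurable_fst hfst hμ
  have hi₂ := integrable_comp_of_map_sum_eq measurable_snd hsnd hν
  refine ⟨fun l => ⟨hfin l, .inr (exists_martingale_disintegration (hi₁ l) (hi₂ l) (hγ l))⟩, ?_⟩
  obtain ⟨κ, hκ, hdis, hbary⟩ := exists_martingale_disintegration (γ := ∑ l, γ l)
    (integrable_finsetSum_measure.2 fun l _ => hi₁ l)
    (integrable_finsetSum_measure.2 fun l _ => hi₂ l) fun θ => by
      rw [integral_finsetSum_measure fun l _ => ?_, Finset.sum_eq_zero fun l _ => hγ l θ]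
      exact ((hi₂ l).sub (hi₁ l)).bdd_mul (θ.continuous.comp continuous_fst).aestronglyMeasurable
        (.of_forall fun p => θ.norm_coe_le_norm p.1)
  rw [hfst] at hdis hbary
  exact ⟨κ, ⟨hκ, by rw [hdis, hsnd], hbary⟩, hdis.symm⟩

end Transport

/-! ### Hedges -/

section Hedge

open scoped BoundedContinuousFunction

variable {ι : Type*} {μ ν : Measure ℝ}

/-- The dual variables `(φ, ψ, (θ_l))`: continuous static positions `φ`, `ψ` integrable for the
marginals, and bounded continuous trading strategies `θ_l`. -/
abbrev Hedge (μ ν : Measure ℝ) (ι : Type*) : Type _ := IntegrableC μ × IntegrableC ν × (ι → ℝ →ᵇ ℝ)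

/-- The first static position of a hedge. -/
abbrev Hedge.φ (h : Hedge μ ν ι) : C(ℝ, ℝ) := h.1

/-- The second static position of a hedge. -/
abbrev Hedge.ψ (h : Hedge μ ν ι) : C(ℝ, ℝ) := h.2.1

/-- The trading strategies of a hedge. -/
abbrev Hedge.θ (h : Hedge μ ν ι) : ι → ℝ →ᵇ ℝ := h.2.2

/-- The price of a hedge, the dual objective. -/
def cost : Hedge μ ν ι →ₗ[ℝ] ℝ where
  toFun h := ∫ x, h.φ x ∂μ + ∫ y, h.ψ y ∂ν
  map_add' h k := by
    rw [add_add_add_comm, ← integral_add h.1.2 k.1.2, ← integral_add h.2.1.2 k.2.1.2]; rfl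
  map_smul' r h := by
    rw [RingHom.id_apply, smul_eq_mul, mul_add, ← integral_const_mul, ← integral_const_mul]; rfl

/-- The payoffs `φ x + ψ y + θ_l x * (y - x)` of a hedge. -/
def payoff : Hedge μ ν ι →ₗ[ℝ] ι → C(ℝ × ℝ, ℝ) where
  toFun h l := ⟨fun p => h.φ p.1 + h.ψ p.2 + h.θ l p.1 * (p.2 - p.1), by fun_prop⟩
  map_add' h k := by
    ext l p
    change (h.φ p.1 + k.φ p.1) + (h.ψ p.2 + k.ψ p.2) + (h.θ l p.1 + k.θ l p.1) * (p.2 - p.1) =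
      (h.φ p.1 + h.ψ p.2 + h.θ l p.1 * (p.2 - p.1)) + (k.φ p.1 + k.ψ p.2 + k.θ l p.1 * (p.2 - p.1))
    ring
  map_smul' r h := by
    ext l p
    change r * h.φ p.1 + r * h.ψ p.2 + r * h.θ l p.1 * (p.2 - p.1) =
      r * (h.φ p.1 + h.ψ p.2 + h.θ l p.1 * (p.2 - p.1))
    ring

theorem payoff_apply (h : Hedge μ ν ι) (l : ι) (p : ℝ × ℝ) :
    payoff h l p = h.φ p.1 + h.ψ p.2 + h.θ l p.1 * (p.2 - p.1) := rfl

theorem cost_apply (h : Hedge μ ν ι) : cost h = ∫ x, h.φ x ∂μ + ∫ y, h.ψ y ∂ν := rfl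

theorem payoff_mem_dominatedC (hμ : Integrable id μ) (hν : Integrable id ν) (h : Hedge μ ν ι)
    (l : ι) : payoff h l ∈ DominatedC μ ν := by
  have hid : ∀ {ξ : Measure ℝ}, Integrable id ξ → |ContinuousMap.id ℝ| ∈ IntegrableC ξ :=
    fun hξ => hξ.abs
  refine ⟨|h.φ| + ‖h.θ l‖ • |.id ℝ|, add_mem h.1.2.abs (Submodule.smul_mem _ _ (hid hμ)),
    |h.ψ| + ‖h.θ l‖ • |.id ℝ|, add_mem h.2.1.2.abs (Submodule.smul_mem _ _ (hid hν)), fun p => ?_⟩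
  calc |h.φ p.1 + h.ψ p.2 + h.θ l p.1 * (p.2 - p.1)|
      ≤ |h.φ p.1| + |h.ψ p.2| + |h.θ l p.1| * |p.2 - p.1| := by
        rw [← abs_mul]; exact abs_add_three _ _ _
    _ ≤ |h.φ p.1| + |h.ψ p.2| + ‖h.θ l‖ * (|p.2| + |p.1|) := by
        gcongr
        · exact (h.θ l).norm_coe_le_norm p.1
        · exact abs_sub _ _
    _ = |h.φ p.1| + ‖h.θ l‖ * |p.1| + (|h.ψ p.2| + ‖h.θ l‖ * |p.2|) := by ring

/-- The payoffs of a hedge as a family of dominated functions. -/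
def dominatedPayoff (hμ : Integrable id μ) (hν : Integrable id ν) :
    Hedge μ ν ι →ₗ[ℝ] ι → DominatedC μ ν :=
  .pi fun l => .codRestrict _ (.proj l ∘ₗ payoff) fun h => payoff_mem_dominatedC hμ hν h l

theorem MLfeasible.sum_integral_payoff [IsProbabilityMeasure μ] {L : ℕ}
    {γ : Fin L → Measure (ℝ × ℝ)} (hγ : MLfeasible μ ν γ) (hμ : Integrable id μ)
    (hν : Integrable id ν) (h : Hedge μ ν (Fin L)) :
    (∀ l, Integrable (payoff h l) (γ l)) ∧ ∑ l, ∫ p, payoff h l p ∂(γ l) = cost h := by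
  have hint₁ := fun {f} (hf : Integrable f μ) =>
    integrable_comp_of_map_sum_eq measurable_fst hγ.map_fst hf
  have hint₂ := fun {f} (hf : Integrable f ν) =>
    integrable_comp_of_map_sum_eq measurable_snd hγ.map_snd hf
  have hθ : ∀ l, Integrable (fun p : ℝ × ℝ => h.θ l p.1 * (p.2 - p.1)) (γ l) := fun l =>
    ((hint₂ hν l).sub (hint₁ hμ l)).bdd_mul
      ((h.θ l).continuous.comp continuous_fst).aestronglyMeasurable
      (.of_forall fun p => (h.θ l).norm_coe_le_norm p.1)
  have hstat : ∀ l, Integrable (fun p : ℝ × ℝ => h.φ p.1 + h.ψ p.2) (γ l) := fun l =>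
    (hint₁ h.1.2 l).add (hint₂ h.2.1.2 l)
  refine ⟨fun l => (hstat l).add (hθ l), ?_⟩
  calc ∑ l, ∫ p, payoff h l p ∂(γ l)
      = ∑ l, (∫ p, h.φ p.1 ∂(γ l) + ∫ p, h.ψ p.2 ∂(γ l)) := Finset.sum_congr rfl fun l _ => by
        simp only [payoff_apply]
        rw [integral_add (hstat l) (hθ l), integral_add (hint₁ h.1.2 l) (hint₂ h.2.1.2 l),
          (hγ.1 l).integral_mul_sub_eq_zero (hθ l), add_zero]
    _ = cost h := by
        rw [Finset.sum_add_distrib, sum_integral_comp_of_map_sum_eq measurable_fst hγ.map_fst h.1.2,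
          sum_integral_comp_of_map_sum_eq measurable_snd hγ.map_snd h.2.1.2, cost_apply]

/-- `χ` is a convex function separating the two static positions of a hedge. -/
structure IsSeparator (h : Hedge μ ν ι) (χ : ℝ → ℝ) : Prop where
  convexOn : ConvexOn ℝ univ χ
  neg_le : ∀ x, -h.φ x ≤ χ x
  le : ∀ y, χ y ≤ h.ψ y

theorem exists_isSeparator [Nonempty ι] {h : Hedge μ ν ι} (hh : 0 ≤ payoff h) :
    ∃ χ, IsSeparator h χ := by
  obtain ⟨l⟩ := ‹Nonempty ι›
  have hle : ∀ x y, -h.φ x + -h.θ l x * (y - x) ≤ h.ψ y := fun x y => by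
    have : 0 ≤ h.φ x + h.ψ y + h.θ l x * (y - x) := hh l (x, y)
    linarith
  have hbdd : ∀ y, BddAbove (range fun x => -h.φ x + -h.θ l x * (y - x)) := fun y =>
    ⟨h.ψ y, forall_mem_range.2 fun x => hle x y⟩
  refine ⟨fun y => ⨆ x, (-h.φ x + -h.θ l x * (y - x)), ⟨convex_univ, ?_⟩, fun x => ?_,
    fun y => ciSup_le fun x => hle x y⟩
  · refine fun y _ z _ s t hs ht hst => ciSup_le fun x => ?_
    refine ((convexOn_affine (-h.φ x) (-h.θ l x) x).2 (mem_univ y) (mem_univ z) hs ht hst).trans ?_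
    exact add_le_add (smul_le_smul_of_nonneg_left (le_ciSup (hbdd y) x) hs)
      (smul_le_smul_of_nonneg_left (le_ciSup (hbdd z) x) ht)
  · simpa using le_ciSup (hbdd x) x

namespace IsSeparator

variable {h : Hedge μ ν ι} {χ : ℝ → ℝ}

theorem convex_setOf : Convex ℝ {q : Hedge μ ν ι × (ℝ → ℝ) | IsSeparator q.1 q.2} := by
  intro q hq q' hq' s t hs ht _
  refine ⟨(hq.convexOn.smul hs).add (hq'.convexOn.smul ht), fun x => ?_, fun y => ?_⟩
  · calc -(s * q.1.φ x + t * q'.1.φ x) = s * -q.1.φ x + t * -q'.1.φ x := by ring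
      _ ≤ s * q.2 x + t * q'.2 x := by gcongr <;> apply neg_le <;> assumption
  · exact add_le_add (mul_le_mul_of_nonneg_left (hq.le y) hs)
      (mul_le_mul_of_nonneg_left (hq'.le y) ht)

theorem integrable [IsFiniteMeasure ν] (hχ : IsSeparator h χ) (hν : Integrable id ν) :
    Integrable χ ν := by
  obtain ⟨p, hp⟩ := exists_isSubgradient hχ.convexOn 0
  exact integrable_of_le_of_le (continuous_of_convexOn hχ.convexOn).aestronglyMeasurable
    (.of_forall hp) (.of_forall hχ.le) (integrable_affine hν _ _ _) h.2.1.2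

theorem integrable_add [IsFiniteMeasure ν] (hχ : IsSeparator h χ) (hcx : ConvexOrder μ ν)
    (hν : Integrable id ν) : Integrable (fun x => h.φ x + χ x) μ :=
  h.1.2.add (hcx χ hχ.convexOn (hχ.integrable hν)).1

theorem integrable_sub [IsFiniteMeasure ν] (hχ : IsSeparator h χ) (hν : Integrable id ν) :
    Integrable (fun y => h.ψ y - χ y) ν :=
  h.2.1.2.sub (hχ.integrable hν)

theorem add_nonneg (hχ : IsSeparator h χ) : 0 ≤ fun x => h.φ x + χ x := fun x =>
  neg_le_iff_add_nonneg'.1 (hχ.neg_le x)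

theorem sub_nonneg (hχ : IsSeparator h χ) : 0 ≤ fun y => h.ψ y - χ y := fun y =>
  _root_.sub_nonneg.2 (hχ.le y)

theorem integral_add_add_integral_sub [IsFiniteMeasure ν] (hχ : IsSeparator h χ)
    (hcx : ConvexOrder μ ν) (hν : Integrable id ν) :
    ∫ x, (h.φ x + χ x) ∂μ + ∫ y, (h.ψ y - χ y) ∂ν + gap μ ν χ = cost h := by
  have hi := hχ.integrable hν
  rw [integral_add h.1.2 (hcx χ hχ.convexOn hi).1, integral_sub h.2.1.2 hi, gap, cost_apply]
  ring

theorem gap_le_cost [IsFiniteMeasure ν] (hχ : IsSeparator h χ) (hcx : ConvexOrder μ ν)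
    (hν : Integrable id ν) : gap μ ν χ ≤ cost h := by
  linarith [hχ.integral_add_add_integral_sub hcx hν, integral_nonneg (μ := μ) hχ.add_nonneg,
    integral_nonneg (μ := ν) hχ.sub_nonneg]

theorem integral_add_le_cost [IsFiniteMeasure ν] (hχ : IsSeparator h χ) (hcx : ConvexOrder μ ν)
    (hν : Integrable id ν) : ∫ x, (h.φ x + χ x) ∂μ ≤ cost h := by
  linarith [hχ.integral_add_add_integral_sub hcx hν, integral_nonneg (μ := ν) hχ.sub_nonneg,
    hcx.gap_nonneg hχ.convexOn (hχ.integrable hν)]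

theorem integral_sub_le_cost [IsFiniteMeasure ν] (hχ : IsSeparator h χ) (hcx : ConvexOrder μ ν)
    (hν : Integrable id ν) : ∫ y, (h.ψ y - χ y) ∂ν ≤ cost h := by
  linarith [hχ.integral_add_add_integral_sub hcx hν, integral_nonneg (μ := μ) hχ.add_nonneg,
    hcx.gap_nonneg hχ.convexOn (hχ.integrable hν)]

end IsSeparator

theorem cost_nonneg [Nonempty ι] [IsFiniteMeasure ν] (hcx : ConvexOrder μ ν) (hν : Integrable id ν)
    {h : Hedge μ ν ι} (hh : 0 ≤ payoff h) : 0 ≤ cost h := by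
  obtain ⟨χ, hχ⟩ := exists_isSeparator hh
  exact (hcx.gap_nonneg hχ.convexOn (hχ.integrable hν)).trans (hχ.gap_le_cost hcx hν)

/-- The costless hedge of zero payoff that holds the affine position `r + p * (z - a)` against its
opposite. -/
def affineHedge [IsFiniteMeasure μ] [IsFiniteMeasure ν] (hμ : Integrable id μ)
    (hν : Integrable id ν) (r p a : ℝ) : Hedge μ ν ι :=
  let f : C(ℝ, ℝ) := ⟨fun z => r + p * (z - a), by fun_prop⟩
  ⟨⟨f, integrable_affine hμ r p a⟩, -⟨f, integrable_affine hν r p a⟩, fun _ => .const ℝ p⟩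

theorem payoff_affineHedge [IsFiniteMeasure μ] [IsFiniteMeasure ν] (hμ : Integrable id μ)
    (hν : Integrable id ν) (r p a : ℝ) : payoff (affineHedge (ι := ι) hμ hν r p a) = 0 := by
  ext l q
  change r + p * (q.1 - a) + -(r + p * (q.2 - a)) + p * (q.2 - q.1) = 0
  ring

variable [IsProbabilityMeasure μ] [IsProbabilityMeasure ν]

theorem cost_affineHedge (hcx : ConvexOrder μ ν) (hμ : Integrable id μ) (hν : Integrable id ν)
    (r p a : ℝ) : cost (affineHedge (ι := ι) hμ hν r p a) = 0 := by
  change ∫ x, (r + p * (x - a)) ∂μ + ∫ y, -(r + p * (y - a)) ∂ν = 0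
  rw [integral_neg, integral_affine hμ, integral_affine hν, hcx.integral_id_eq hν]
  ring

theorem IsSeparator.add_affineHedge {h : Hedge μ ν ι} {χ : ℝ → ℝ} (hχ : IsSeparator h χ)
    (hμ : Integrable id μ) (hν : Integrable id ν) (a p : ℝ) :
    IsSeparator (h + affineHedge hμ hν (χ a) p a) (excess χ a p) where
  convexOn := convexOn_excess hχ.convexOn a p
  neg_le x := by
    change -(h.φ x + (χ a + p * (x - a))) ≤ χ x - (χ a + p * (x - a))
    linarith [hχ.neg_le x]
  le y := by
    change χ y - (χ a + p * (y - a)) ≤ h.ψ y + -(χ a + p * (y - a))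
    linarith [hχ.le y]

theorem exists_isSeparator_nonneg [Nonempty ι] (hcx : ConvexOrder μ ν) (hν : Integrable id ν)
    {h : Hedge μ ν ι} (hh : 0 ≤ payoff h) (x₀ : ℝ) :
    ∃ (k : Hedge μ ν ι) (χ : ℝ → ℝ), payoff k = payoff h ∧ cost k = cost h ∧
      IsSeparator k χ ∧ 0 ≤ χ ∧ χ x₀ = 0 := by
  obtain ⟨χ, hχ⟩ := exists_isSeparator hh
  obtain ⟨p, hp⟩ := exists_isSubgradient hχ.convexOn x₀
  have hμ := hcx.integrable_id hν
  exact ⟨h + affineHedge hμ hν (χ x₀) p x₀, excess χ x₀ p,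
    by rw [map_add, payoff_affineHedge, add_zero], by rw [map_add, cost_affineHedge hcx, add_zero],
    hχ.add_affineHedge hμ hν x₀ p, hp.excess_nonneg, excess_self⟩

end Hedge

/-! ### Absence of a duality gap -/

section NoGap

open scoped BoundedContinuousFunction

variable {μ ν : Measure ℝ} {hμ : Integrable id μ} {hν : Integrable id ν}

instance DominatedC.posSMulMono : PosSMulMono ℝ (DominatedC μ ν) where
  smul_le_smul_of_nonneg_left _ hr _ _ h p := mul_le_mul_of_nonneg_left (h p) hr

theorem isMarginalBounded_comp_single {ι : Type*} [DecidableEq ι]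
    {Λ : (ι → DominatedC μ ν) →ₗ[ℝ] ℝ} (hpos : ∀ f, 0 ≤ f → 0 ≤ Λ f)
    (hpay : ∀ h, Λ (dominatedPayoff hμ hν h) = cost h) (l : ι) :
    IsMarginalBounded (Λ ∘ₗ LinearMap.single ℝ (fun _ => DominatedC μ ν) l) := by
  intro f a ha b hb ha0 hb0 hf
  have hpayoff : ∀ l p, payoff (⟨a, ha⟩, ⟨b, hb⟩, (0 : ι → ℝ →ᵇ ℝ)) l p = a p.1 + b p.2 :=
    fun l p => by simp [payoff_apply, Hedge.φ, Hedge.ψ, Hedge.θ]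
  have hle : Pi.single l f ≤ dominatedPayoff hμ hν (⟨a, ha⟩, ⟨b, hb⟩, 0) :=
    update_le_iff.2 ⟨fun p => (hf p).trans_eq (hpayoff l p).symm, fun j _ p =>
      (add_nonneg (ha0 p.1) (hb0 p.2)).trans_eq (hpayoff j p).symm⟩
  have := hpos _ (sub_nonneg.2 hle)
  rwa [map_sub, hpay, sub_nonneg] at this

theorem sum_integral_of_isRepresented {ι : Type*} [Fintype ι] [DecidableEq ι]
    {Λ : (ι → DominatedC μ ν) →ₗ[ℝ] ℝ} {γ : ι → Measure (ℝ × ℝ)}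
    (hγ : ∀ l f, IsRepresented (Λ ∘ₗ LinearMap.single ℝ (fun _ => DominatedC μ ν) l) (γ l) f)
    (f : ι → DominatedC μ ν) : ∑ l, ∫ p, (f l).1 p ∂(γ l) = Λ f := by
  conv_rhs => rw [← Finset.univ_sum_single f, map_sum]
  exact Finset.sum_congr rfl fun l _ => (hγ l (f l)).2

theorem map_sum_eq_of_sum_integral_eq {α β ι : Type*} [Fintype ι] [TopologicalSpace α]
    [MeasurableSpace α] [OpensMeasurableSpace α] [TopologicalSpace β] [MeasurableSpace β]
    [BorelSpace β] [HasOuterApproxClosed β] {m : ι → Measure α} [∀ i, IsFiniteMeasure (m i)]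
    {ξ : Measure β} [IsFiniteMeasure ξ] {g : α → β} (hg : Continuous g)
    (h : ∀ f : β →ᵇ ℝ, ∑ i, ∫ a, f (g a) ∂(m i) = ∫ b, f b ∂ξ) : (∑ i, m i).map g = ξ := by
  refine ext_of_forall_integral_eq_of_IsFiniteMeasure fun f => ?_
  have hint : ∀ i, Integrable (fun a => f (g a)) (m i) := fun i =>
    (f.compContinuous ⟨g, hg⟩).integrable (m i)
  rw [integral_map hg.measurable.aemeasurable f.continuous.measurable.aestronglyMeasurable,
    integral_finsetSum_measure fun i _ => hint i, h]

theorem MLfeasible.of_sum_integral_payoff [IsFiniteMeasure μ] [IsFiniteMeasure ν] {L : ℕ}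
    {γ : Fin L → Measure (ℝ × ℝ)} (hfin : ∀ l, IsFiniteMeasure (γ l)) (hμ : Integrable id μ)
    (hν : Integrable id ν)
    (hγ : ∀ h : Hedge μ ν (Fin L), ∑ l, ∫ p, payoff h l p ∂(γ l) = cost h) :
    MLfeasible μ ν γ := by
  refine .of_integral_eq_zero hfin hμ hν (map_sum_eq_of_sum_integral_eq continuous_fst fun f => ?_)
    (map_sum_eq_of_sum_integral_eq continuous_snd fun f => ?_) fun l θ => ?_
  · simpa [payoff_apply, cost_apply, Hedge.φ, Hedge.ψ, Hedge.θ] using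
      hγ (⟨f.toContinuousMap, f.integrable μ⟩, 0, 0)
  · simpa [payoff_apply, cost_apply, Hedge.φ, Hedge.ψ, Hedge.θ] using
      hγ (0, ⟨f.toContinuousMap, f.integrable ν⟩, 0)
  · have := hγ (0, 0, Pi.single l θ)
    rw [Finset.sum_eq_single_of_mem l (Finset.mem_univ l) fun j _ hj => by
      simp [payoff_apply, Hedge.φ, Hedge.ψ, Hedge.θ, Pi.single_eq_of_ne hj]] at this
    simpa [payoff_apply, cost_apply, Hedge.φ, Hedge.ψ, Hedge.θ] using this

theorem exists_le_dominatedPayoff {ι : Type*} [Finite ι] (hμ : Integrable id μ)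
    (hν : Integrable id ν) (f : ι → DominatedC μ ν) : ∃ h, f ≤ dominatedPayoff hμ hν h := by
  have := Fintype.ofFinite ι
  choose a ha b hb ha0 hb0 hab using fun l => DominatedC.exists_nonneg_bound (f l).2
  refine ⟨(∑ l, ⟨a l, ha l⟩, ∑ l, ⟨b l, hb l⟩, 0), fun l p => ?_⟩
  have hle : ∀ {c : ι → C(ℝ, ℝ)}, (∀ l, 0 ≤ c l) → ∀ x, c l x ≤ (∑ l, c l) x := fun hc x =>
    Finset.single_le_sum (fun i _ => hc i) (Finset.mem_univ l) x
  calc (f l).1 p ≤ a l p.1 + b l p.2 := (le_abs_self _).trans (hab l p)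
    _ ≤ (∑ l, a l) p.1 + (∑ l, b l) p.2 := add_le_add (hle ha0 _) (hle hb0 _)
    _ = payoff (∑ l, ⟨a l, ha l⟩, ∑ l, ⟨b l, hb l⟩, 0) l p := by
      simp [payoff_apply, Hedge.φ, Hedge.ψ, Hedge.θ]

theorem exists_MLfeasible_isGLB_cost [IsProbabilityMeasure μ] [IsProbabilityMeasure ν] {L : ℕ}
    [Nonempty (Fin L)] (hcx : ConvexOrder μ ν) (hν : Integrable id ν) (c : Fin L → DominatedC μ ν) :
    ∃ γ : Fin L → Measure (ℝ × ℝ), MLfeasible μ ν γ ∧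
      IsGLB (cost '' {h : Hedge μ ν (Fin L) | ∀ l, (c l).1 ≤ payoff h l})
        (∑ l, ∫ p, (c l).1 p ∂(γ l)) := by
  have hμ := hcx.integrable_id hν
  obtain ⟨Λ, hpos, hpay, hglb⟩ := exists_positive_linearMap_attaining_superPrice
    (T := dominatedPayoff hμ hν) (k := cost) (exists_le_dominatedPayoff hμ hν)
    (fun h hh => cost_nonneg hcx hν hh) c
  choose γ hfin hrep using fun l => (isMarginalBounded_comp_single hpos hpay l).exists_isRepresented
  have hsum := sum_integral_of_isRepresented hrep
  exact ⟨γ, .of_sum_integral_payoff hfin hμ hν fun h =>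
    (hsum (dominatedPayoff hμ hν h)).trans (hpay h), (hsum c).symm ▸ hglb⟩

end NoGap

/-! ### Convergent hedges -/

section ModeratedHedge

variable {ι : Type*} {μ ν : Measure ℝ} {c : ι → C(ℝ × ℝ, ℝ)} {x₀ v P : ℝ}

/-- A pair `(h, χ)` of a hedge `h` of `c` of price at most `v` and a function `χ` separating its
static positions, normalized at `x₀`. The functions `φ + χ`, `χ` and `ψ - χ` are then nonnegative,
which `φ` and `ψ` need not be. -/
structure IsModeratedHedge (c : ι → C(ℝ × ℝ, ℝ)) (x₀ v : ℝ) (q : Hedge μ ν ι × (ℝ → ℝ)) :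
    Prop where
  le_payoff : c ≤ payoff q.1
  cost_le : cost q.1 ≤ v
  isSeparator : IsSeparator q.1 q.2
  nonneg : 0 ≤ q.2
  apply_base : q.2 x₀ = 0

theorem IsModeratedHedge.mono {w : ℝ} {q : Hedge μ ν ι × (ℝ → ℝ)}
    (hq : IsModeratedHedge c x₀ v q) (hvw : v ≤ w) : IsModeratedHedge c x₀ w q :=
  { hq with cost_le := hq.cost_le.trans hvw }

theorem IsModeratedHedge.isModerator [IsFiniteMeasure ν] {q : Hedge μ ν ι × (ℝ → ℝ)}
    (hq : IsModeratedHedge c x₀ v q) (hcx : ConvexOrder μ ν) (hν : Integrable id ν) :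
    IsModerator μ ν x₀ v q.2 where
  convexOn := hq.isSeparator.convexOn
  nonneg := hq.nonneg
  apply_base := hq.apply_base
  integrable := hq.isSeparator.integrable hν
  gap_le := (hq.isSeparator.gap_le_cost hcx hν).trans hq.cost_le

theorem IsModeratedHedge.convex_setOf :
    Convex ℝ {q : Hedge μ ν ι × (ℝ → ℝ) | IsModeratedHedge c x₀ v q} := by
  have hpayoff : Convex ℝ {h : Hedge μ ν ι | c ≤ payoff h} := by
    intro h hh k hk s t hs ht hst l p
    have := convex_Ici (𝕜 := ℝ) (c l p) (hh l p) (hk l p) hs ht hst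
    rwa [map_add, map_smul, map_smul]
  intro q hq r hr s t hs ht hst
  exact ⟨hpayoff hq.le_payoff hr.le_payoff hs ht hst,
    (convex_halfSpace_le cost.isLinear v) hq.cost_le hr.cost_le hs ht hst,
    IsSeparator.convex_setOf hq.isSeparator hr.isSeparator hs ht hst,
    convex_Ici (0 : ℝ → ℝ) hq.nonneg hr.nonneg hs ht hst,
    by simp [hq.apply_base, hr.apply_base]⟩

theorem exists_isModeratedHedge [Nonempty ι] [IsProbabilityMeasure μ] [IsProbabilityMeasure ν]
    (hcx : ConvexOrder μ ν) (hν : Integrable id ν) (hc : 0 ≤ c) {h : Hedge μ ν ι}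
    (hh : c ≤ payoff h) (x₀ : ℝ) : ∃ q : Hedge μ ν ι × (ℝ → ℝ),
      IsModeratedHedge c x₀ (cost h) q := by
  obtain ⟨k, χ, hpayoff, hcost, hχ, hnonneg, hbase⟩ :=
    exists_isSeparator_nonneg hcx hν (hc.trans hh) x₀
  exact ⟨(k, χ), hpayoff ▸ hh, hcost.le, hχ, hnonneg, hbase⟩

/-- The functions `φ + χ`, `χ` and `ψ - χ` of a pair of a hedge and a function `χ`. -/
def moderatedParts (i : Fin 3) : Hedge μ ν ι × (ℝ → ℝ) →ₗ[ℝ] ℝ → ℝ where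
  toFun q := ![q.1.φ + q.2, q.2, q.1.ψ - q.2] i
  map_add' q r := by
    fin_cases i
    · exact add_add_add_comm (q.1.φ : ℝ → ℝ) _ _ _
    · rfl
    · exact add_sub_add_comm (q.1.ψ : ℝ → ℝ) _ _ _
  map_smul' s q := by
    fin_cases i
    · exact (smul_add s (q.1.φ : ℝ → ℝ) q.2).symm
    · rfl
    · exact (smul_sub s (q.1.ψ : ℝ → ℝ) q.2).symm

theorem IsModeratedHedge.moderatedParts_nonneg {q : Hedge μ ν ι × (ℝ → ℝ)}
    (hq : IsModeratedHedge c x₀ v q) (i : Fin 3) : 0 ≤ moderatedParts i q := by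
  fin_cases i
  · exact hq.isSeparator.add_nonneg
  · exact hq.nonneg
  · exact hq.isSeparator.sub_nonneg

theorem IsModeratedHedge.measurable_moderatedParts {q : Hedge μ ν ι × (ℝ → ℝ)}
    (hq : IsModeratedHedge c x₀ v q) (i : Fin 3) : Measurable (moderatedParts i q) := by
  have hχ := (continuous_of_convexOn hq.isSeparator.convexOn).measurable
  fin_cases i
  · exact q.1.φ.continuous.measurable.add hχ
  · exact hχ
  · exact q.1.ψ.continuous.measurable.sub hχ

section Bounded

variable {q : ℕ → Hedge μ ν ι × (ℝ → ℝ)}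

theorem ae_not_tendsto_atTop_φ_add [IsFiniteMeasure ν] (hcx : ConvexOrder μ ν)
    (hν : Integrable id ν) (hq : ∀ n, IsModeratedHedge c x₀ v (q n)) :
    ∀ᵐ x ∂μ, ¬ Tendsto (fun n => moderatedParts 0 (q n) x) atTop atTop :=
  ae_not_tendsto_atTop_of_integral_le (fun n => (hq n).measurable_moderatedParts 0)
    (fun n => (hq n).moderatedParts_nonneg 0) (fun n => (hq n).isSeparator.integrable_add hcx hν)
    fun n => ((hq n).isSeparator.integral_add_le_cost hcx hν).trans (hq n).cost_le

theorem ae_not_tendsto_atTop_ψ_sub [IsFiniteMeasure ν] (hcx : ConvexOrder μ ν)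
    (hν : Integrable id ν) (hq : ∀ n, IsModeratedHedge c x₀ v (q n)) :
    ∀ᵐ y ∂ν, ¬ Tendsto (fun n => moderatedParts 2 (q n) y) atTop atTop :=
  ae_not_tendsto_atTop_of_integral_le (fun n => (hq n).measurable_moderatedParts 2)
    (fun n => (hq n).moderatedParts_nonneg 2) (fun n => (hq n).isSeparator.integrable_sub hν)
    fun n => ((hq n).isSeparator.integral_sub_le_cost hcx hν).trans (hq n).cost_le

theorem IrreducibleOrder.not_tendsto_atTop_separator [IsProbabilityMeasure μ]
    [IsProbabilityMeasure ν] (h : IrreducibleOrder μ ν) (hx₀ : x₀ ∈ domain μ ν)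
    (hq : ∀ n, IsModeratedHedge c x₀ v (q n)) {y : ℝ} (hy : y ∈ domain μ ν ∨ ν {y} ≠ 0) :
    ¬ Tendsto (fun n => moderatedParts 1 (q n) y) atTop atTop := by
  obtain ⟨K, hK⟩ := h.moderators_bddAbove (C := v) hx₀ hy
  exact fun htop => not_bddAbove_of_tendsto_atTop htop
    ⟨K, forall_mem_range.2 fun n => hK _ ((hq n).isModerator h.convexOrder h.integrable_id)⟩

theorem IrreducibleOrder.ae_tendsto_of_moderatedParts [IsProbabilityMeasure μ]
    [IsProbabilityMeasure ν] (h : IrreducibleOrder μ ν) (hx₀ : x₀ ∈ domain μ ν)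
    (hq : ∀ n, IsModeratedHedge c x₀ v (q n))
    (hlim : ∀ i, ∀ᵐ z ∂(μ + ν), (∃ l, Tendsto (fun n => moderatedParts i (q n) z) atTop (𝓝 l)) ∨
      Tendsto (fun n => moderatedParts i (q n) z) atTop atTop) :
    (∀ᵐ x ∂μ, ∃ l, Tendsto (fun n => (q n).1.φ x) atTop (𝓝 l)) ∧
      ∀ᵐ y ∂ν, ∃ l, Tendsto (fun n => (q n).1.ψ y) atTop (𝓝 l) := by
  have hlimμ := fun i => (ae_add_measure_iff.1 (hlim i)).1
  have hlimν := fun i => (ae_add_measure_iff.1 (hlim i)).2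
  constructor
  · filter_upwards [hlimμ 0, hlimμ 1, h.ae_mem_domain,
      ae_not_tendsto_atTop_φ_add h.convexOrder h.integrable_id hq] with x hadd hχ hx hbdd
    obtain ⟨a, ha⟩ := hadd.resolve_right hbdd
    obtain ⟨b, hb⟩ := hχ.resolve_right (h.not_tendsto_atTop_separator hx₀ hq (.inl hx))
    exact ⟨a - b, (ha.sub hb).congr fun n => add_sub_cancel_right _ _⟩
  · filter_upwards [hlimν 2, hlimν 1, h.ae_mem_domain_or_atom,
      ae_not_tendsto_atTop_ψ_sub h.convexOrder h.integrable_id hq] with y hsub hχ hy hbdd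
    obtain ⟨a, ha⟩ := hsub.resolve_right hbdd
    obtain ⟨b, hb⟩ := hχ.resolve_right (h.not_tendsto_atTop_separator hx₀ hq hy)
    exact ⟨a + b, (ha.add hb).congr fun n => sub_add_cancel _ _⟩

end Bounded

end ModeratedHedge

section OptimizingSeq

variable {ι : Type*} {μ ν : Measure ℝ} {c : ι → C(ℝ × ℝ, ℝ)} {P : ℝ}

/-- A sequence of hedges of `c` whose prices exceed `P` by summable amounts and whose static
positions converge almost everywhere. -/
structure IsOptimizingSeq (c : ι → C(ℝ × ℝ, ℝ)) (P : ℝ) (k : ℕ → Hedge μ ν ι) : Prop where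
  le_payoff : ∀ n, c ≤ payoff (k n)
  cost_le : ∀ n, cost (k n) ≤ P + (1 / 2) ^ n
  ae_tendsto_φ : ∀ᵐ x ∂μ, ∃ l, Tendsto (fun n => (k n).φ x) atTop (𝓝 l)
  ae_tendsto_ψ : ∀ᵐ y ∂ν, ∃ l, Tendsto (fun n => (k n).ψ y) atTop (𝓝 l)

theorem IsOptimizingSeq.sub {k : ℕ → Hedge μ ν ι} {d : Hedge μ ν ι}
    (hk : IsOptimizingSeq (c + payoff d) (P + cost d) k) :
    IsOptimizingSeq c P fun n => k n - d where
  le_payoff n := by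
    rw [map_sub]
    exact le_sub_iff_add_le.2 (hk.le_payoff n)
  cost_le n := by
    rw [map_sub]
    linarith [hk.cost_le n]
  ae_tendsto_φ := hk.ae_tendsto_φ.mono fun x ⟨l, hl⟩ => ⟨l - d.φ x, hl.sub_const _⟩
  ae_tendsto_ψ := hk.ae_tendsto_ψ.mono fun y ⟨l, hl⟩ => ⟨l - d.ψ y, hl.sub_const _⟩

theorem isGLB_cost_add_payoff (hP : IsGLB (cost '' {k : Hedge μ ν ι | c ≤ payoff k}) P)
    (d : Hedge μ ν ι) :
    IsGLB (cost '' {k : Hedge μ ν ι | c + payoff d ≤ payoff k}) (P + cost d) := by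
  refine ⟨forall_mem_image.2 fun k hk => ?_, fun b hb => ?_⟩
  · have hkd : c ≤ payoff (k - d) := by
      rw [map_sub]
      exact le_sub_iff_add_le.2 hk
    rw [← le_sub_iff_add_le, ← map_sub]
    exact hP.1 (mem_image_of_mem _ hkd)
  · refine sub_le_iff_le_add.1 (hP.2 (forall_mem_image.2 fun k hk => sub_le_iff_le_add.2 ?_))
    have hkd : c + payoff d ≤ payoff (k + d) := by
      rw [map_add]
      exact add_le_add_left hk (payoff d)
    rw [← map_add]
    exact hb (mem_image_of_mem _ hkd)

variable [Nonempty ι] [IsProbabilityMeasure μ] [IsProbabilityMeasure ν]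

theorem IrreducibleOrder.exists_isOptimizingSeq_of_nonneg (h : IrreducibleOrder μ ν) (hc : 0 ≤ c)
    (hP : IsGLB (cost '' {k : Hedge μ ν ι | c ≤ payoff k}) P) :
    ∃ k : ℕ → Hedge μ ν ι, IsOptimizingSeq c P k := by
  obtain ⟨x₀, hx₀⟩ := h.isConnected_domain.nonempty
  obtain ⟨q, hq, hlim⟩ := exists_ae_tendsto_or_tendsto_atTop_pi (P := μ + ν)
    (D := fun n : ℕ => {q : Hedge μ ν ι × (ℝ → ℝ) | IsModeratedHedge c x₀ (P + (1 / 2) ^ n) q})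
    (fun n m hnm q (hq : IsModeratedHedge c x₀ _ q) => hq.mono (add_le_add_right
      (pow_le_pow_of_le_one (by norm_num) (by norm_num) hnm) P))
    (fun n => by
      obtain ⟨_, ⟨k, hk, rfl⟩, -, hlt⟩ := hP.exists_between
        (lt_add_of_pos_right P (pow_pos one_half_pos n))
      obtain ⟨q, hq⟩ := exists_isModeratedHedge h.convexOrder h.integrable_id hc hk x₀
      exact ⟨q, hq.mono hlt.le⟩)
    (fun n => IsModeratedHedge.convex_setOf) moderatedParts
    (fun q hq i => hq.measurable_moderatedParts i) (fun q hq i => hq.moderatedParts_nonneg i)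
  obtain ⟨hφ, hψ⟩ := h.ae_tendsto_of_moderatedParts (v := P + 1) hx₀
    (fun n => (hq n).mono (add_le_add_right (pow_le_one₀ (by norm_num) (by norm_num)) P)) hlim
  exact ⟨fun n => (q n).1, fun n => (hq n).le_payoff, fun n => (hq n).cost_le, hφ, hψ⟩

theorem IrreducibleOrder.exists_isOptimizingSeq [Finite ι] (h : IrreducibleOrder μ ν)
    {c : ι → DominatedC μ ν}
    (hP : IsGLB (cost '' {k : Hedge μ ν ι | ∀ l, (c l).1 ≤ payoff k l}) P) :
    ∃ k : ℕ → Hedge μ ν ι, IsOptimizingSeq (fun l => (c l).1) P k := by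
  obtain ⟨d, hd⟩ := exists_le_dominatedPayoff (h.convexOrder.integrable_id h.integrable_id)
    h.integrable_id (-c)
  obtain ⟨k, hk⟩ := h.exists_isOptimizingSeq_of_nonneg (c := (fun l => (c l).1) + payoff d)
    (fun l => neg_le_iff_add_nonneg'.1 (hd l)) (isGLB_cost_add_payoff hP d)
  exact ⟨fun n => k n - d, hk.sub⟩

end OptimizingSeq

/-! ### Limits of optimizing sequences -/

section Limsup

variable {a t : ℕ → ℝ} {b d r : ℝ}

theorem isBoundedUnder_ge_of_le_add_mul (ha : Tendsto a atTop (𝓝 r)) (hd : 0 < d)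
    (hle : ∀ n, b ≤ a n + t n * d) : IsBoundedUnder (· ≥ ·) atTop t :=
  ((ha.const_sub b).div_const d).isBoundedUnder_ge.mono_ge <| .of_forall fun n => by
    rw [div_le_iff₀ hd]
    linarith [hle n]

theorem isBoundedUnder_le_of_le_add_mul (ha : Tendsto a atTop (𝓝 r)) (hd : d < 0)
    (hle : ∀ n, b ≤ a n + t n * d) : IsBoundedUnder (· ≤ ·) atTop t :=
  ((ha.const_sub b).div_const d).isBoundedUnder_le.mono_le <| .of_forall fun n => by
    rw [le_div_iff_of_neg hd]
    linarith [hle n]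

theorem le_add_limsup_mul (ha : Tendsto a atTop (𝓝 r)) (hge : IsBoundedUnder (· ≥ ·) atTop t)
    (hle : IsBoundedUnder (· ≤ ·) atTop t) (h : ∀ n, b ≤ a n + t n * d) :
    b ≤ r + limsup t atTop * d := by
  have hquot : Tendsto (fun n => (b - a n) / d) atTop (𝓝 ((b - r) / d)) :=
    (ha.const_sub b).div_const d
  rcases lt_trichotomy d 0 with hd | rfl | hd
  · have hlim := limsup_le_limsup (.of_forall fun n => (le_div_iff_of_neg hd).2 (by linarith [h n]))
      hge.isCoboundedUnder_le hquot.isBoundedUnder_le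
    rw [hquot.limsup_eq, le_div_iff_of_neg hd] at hlim
    linarith
  · simpa using ge_of_tendsto' ha fun n => by simpa using h n
  · have hlim := limsup_le_limsup (.of_forall fun n => (div_le_iff₀ hd).2 (by linarith [h n]))
      hquot.isCoboundedUnder_le hle
    rw [hquot.limsup_eq, div_le_iff₀ hd] at hlim
    linarith

theorem add_limsup_mul_eq_of_tendsto (ha : Tendsto a atTop (𝓝 r))
    (h : Tendsto (fun n => a n + t n * d) atTop (𝓝 b)) : r + limsup t atTop * d = b := by
  rcases eq_or_ne d 0 with rfl | hd
  · simpa using tendsto_nhds_unique ha (by simpa using h)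
  · have ht : Tendsto t atTop (𝓝 ((b - r) / d)) :=
      ((h.sub ha).div_const d).congr fun n => by
        rw [add_sub_cancel_left, mul_div_cancel_right₀ _ hd]
    rw [ht.limsup_eq, div_mul_cancel₀ _ hd, add_sub_cancel]

theorem tendsto_limsup_of_exists (h : ∃ r, Tendsto a atTop (𝓝 r)) :
    Tendsto a atTop (𝓝 (limsup a atTop)) := by
  obtain ⟨r, hr⟩ := h
  rwa [hr.limsup_eq]

end Limsup

section Optimizer

variable {μ ν : Measure ℝ} {P : ℝ}

theorem MLfeasible.integrable_of_mem_dominatedC [SFinite μ] {L : ℕ}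
    {γ : Fin L → Measure (ℝ × ℝ)} (hγ : MLfeasible μ ν γ) {f : C(ℝ × ℝ, ℝ)}
    (hf : f ∈ DominatedC μ ν) (l : Fin L) : Integrable f (γ l) := by
  obtain ⟨a, ha, b, hb, hab⟩ := hf
  exact ((integrable_comp_of_map_sum_eq measurable_fst hγ.map_fst ha l).add
    (integrable_comp_of_map_sum_eq measurable_snd hγ.map_snd hb l)).mono'
      f.continuous.aestronglyMeasurable (.of_forall hab)

variable [IsProbabilityMeasure μ]

theorem MLfeasible.sum_integral_payoff_sub {L : ℕ} {γ : Fin L → Measure (ℝ × ℝ)}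
    (hγ : MLfeasible μ ν γ) (hμ : Integrable id μ) (hν : Integrable id ν)
    (c : Fin L → DominatedC μ ν) (h : Hedge μ ν (Fin L)) :
    ∑ l, ∫ p, (payoff h l p - (c l).1 p) ∂(γ l) = cost h - ∑ l, ∫ p, (c l).1 p ∂(γ l) := by
  obtain ⟨hint, hsum⟩ := hγ.sum_integral_payoff hμ hν h
  rw [← hsum, ← Finset.sum_sub_distrib]
  exact Finset.sum_congr rfl fun l _ =>
    integral_sub (hint l) (hγ.integrable_of_mem_dominatedC (c l).2 l)

theorem MLfeasible.sum_integral_le_cost {L : ℕ} {γ : Fin L → Measure (ℝ × ℝ)}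
    (hγ : MLfeasible μ ν γ) (hμ : Integrable id μ) (hν : Integrable id ν)
    {c : Fin L → DominatedC μ ν} {h : Hedge μ ν (Fin L)} (hh : ∀ l, (c l).1 ≤ payoff h l) :
    ∑ l, ∫ p, (c l).1 p ∂(γ l) ≤ cost h := by
  rw [← sub_nonneg, ← hγ.sum_integral_payoff_sub hμ hν]
  exact Finset.sum_nonneg fun l _ => integral_nonneg fun p => sub_nonneg.2 (hh l p)

theorem MLfeasible.relaxedValue_eq {L : ℕ} {γ : Fin L → Measure (ℝ × ℝ)} (hγ : MLfeasible μ ν γ)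
    (hμ : Integrable id μ) (hν : Integrable id ν) {c : Fin L → DominatedC μ ν}
    (hglb : IsGLB (cost '' {h : Hedge μ ν (Fin L) | ∀ l, (c l).1 ≤ payoff h l})
      (∑ l, ∫ p, (c l).1 p ∂(γ l))) :
    RelaxedValue μ ν (fun l => (c l).1) = ∑ l, ∫ p, (c l).1 p ∂(γ l) := by
  refine IsGreatest.csSup_eq ⟨⟨γ, hγ, rfl⟩, ?_⟩
  rintro _ ⟨γ', hγ', rfl⟩
  exact hglb.2 (forall_mem_image.2 fun h hh => hγ'.sum_integral_le_cost hμ hν hh)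

theorem IsOptimizingSeq.ae_tendsto_payoff {L : ℕ} {c : Fin L → DominatedC μ ν}
    {k : ℕ → Hedge μ ν (Fin L)} (hk : IsOptimizingSeq (fun l => (c l).1) P k)
    (hμ : Integrable id μ) (hν : Integrable id ν) {γ : Fin L → Measure (ℝ × ℝ)}
    (hγ : MLfeasible μ ν γ) (hP : ∑ l, ∫ p, (c l).1 p ∂(γ l) = P) (l : Fin L) :
    ∀ᵐ p ∂(γ l), Tendsto (fun n => payoff (k n) l p) atTop (𝓝 ((c l).1 p)) := by
  have hnonneg : ∀ n l, 0 ≤ fun p => payoff (k n) l p - (c l).1 p := fun n l p =>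
    sub_nonneg.2 (hk.le_payoff n l p)
  have hbound : ∀ n, ∫ p, (payoff (k n) l p - (c l).1 p) ∂(γ l) ≤ (1 / 2) ^ n := fun n =>
    calc ∫ p, (payoff (k n) l p - (c l).1 p) ∂(γ l)
        ≤ ∑ l, ∫ p, (payoff (k n) l p - (c l).1 p) ∂(γ l) :=
          Finset.single_le_sum (f := fun l => ∫ p, (payoff (k n) l p - (c l).1 p) ∂(γ l))
            (fun l _ => integral_nonneg (hnonneg n l)) (Finset.mem_univ l)
      _ = cost (k n) - P := by rw [hγ.sum_integral_payoff_sub hμ hν, hP]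
      _ ≤ (1 / 2) ^ n := by linarith [hk.cost_le n]
  have hlim := ae_tendsto_zero_of_summable_integral (fun n => hnonneg n l)
    (fun n => ((hγ.sum_integral_payoff hμ hν (k n)).1 l).sub
      (hγ.integrable_of_mem_dominatedC (c l).2 l))
    (summable_geometric_two.of_nonneg_of_le (fun n => integral_nonneg (hnonneg n l)) hbound)
  filter_upwards [hlim] with p hp
  exact tendsto_sub_nhds_zero_iff.1 hp

theorem IrreducibleOrder.le_limsup_of_isOptimizingSeq {ι : Type*} [IsProbabilityMeasure ν]
    (h : IrreducibleOrder μ ν) {c : ι → C(ℝ × ℝ, ℝ)} {k : ℕ → Hedge μ ν ι}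
    (hk : IsOptimizingSeq c P k) (l : ι) {x y : ℝ} (hx : x ∈ domain μ ν)
    (hφ : ∃ r, Tendsto (fun n => (k n).φ x) atTop (𝓝 r))
    (hψ : ∃ r, Tendsto (fun n => (k n).ψ y) atTop (𝓝 r)) :
    c l (x, y) ≤ limsup (fun n => (k n).φ x) atTop + limsup (fun n => (k n).ψ y) atTop +
      limsup (fun n => (k n).θ l x) atTop * (y - x) := by
  have hstatic : ∀ z, (∃ r, Tendsto (fun n => (k n).ψ z) atTop (𝓝 r)) →
      Tendsto (fun n => (k n).φ x + (k n).ψ z) atTop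
        (𝓝 (limsup (fun n => (k n).φ x) atTop + limsup (fun n => (k n).ψ z) atTop)) :=
    fun z hz => (tendsto_limsup_of_exists hφ).add (tendsto_limsup_of_exists hz)
  have hle : ∀ z n, c l (x, z) ≤ (k n).φ x + (k n).ψ z + (k n).θ l x * (z - x) :=
    fun z n => hk.le_payoff n l (x, z)
  obtain ⟨z, hxz, hz⟩ := ((frequently_ae_mem_iff.2 (h.measure_Ioi_ne_zero hx)).and_eventually
    hk.ae_tendsto_ψ).exists
  obtain ⟨w, hwx, hw⟩ := ((frequently_ae_mem_iff.2 (h.measure_Iio_ne_zero hx)).and_eventually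
    hk.ae_tendsto_ψ).exists
  exact le_add_limsup_mul (hstatic y hψ)
    (isBoundedUnder_ge_of_le_add_mul (hstatic z hz) (sub_pos.2 hxz) (hle z))
    (isBoundedUnder_le_of_le_add_mul (hstatic w hw) (sub_neg.2 hwx) (hle w)) (hle y)

end Optimizer

section DualOptimizer

variable {μ ν : Measure ℝ} {L : ℕ}

/-- A dual optimizer `(φ, ψ, (θ_l))` whose static positions are real-valued on Borel sets `G`, `H`
of full measure and are understood to be `+∞` elsewhere. -/
structure IsDualOptimizer (μ ν : Measure ℝ) (c : Fin L → ℝ × ℝ → ℝ) (G H : Set ℝ) (φ ψ : ℝ → ℝ)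
    (θ : Fin L → ℝ → ℝ) : Prop where
  measurableSet_fst : MeasurableSet G
  measurableSet_snd : MeasurableSet H
  measurable_fst : Measurable φ
  measurable_snd : Measurable ψ
  measurable_strategy : ∀ l, Measurable (θ l)
  ae_mem_fst : ∀ᵐ x ∂μ, x ∈ G
  ae_mem_snd : ∀ᵐ y ∂ν, y ∈ H
  le : ∀ l, ∀ x ∈ G, ∀ y ∈ H, c l (x, y) ≤ φ x + ψ y + θ l x * (y - x)
  ae_eq : ∀ γ, MLfeasible μ ν γ → ∑ l, ∫ p, c l p ∂(γ l) = RelaxedValue μ ν c →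
    ∀ l, ∀ᵐ p ∂(γ l), p.1 ∈ G → p.2 ∈ H → c l p = φ p.1 + ψ p.2 + θ l p.1 * (p.2 - p.1)

theorem IrreducibleOrder.isDualOptimizer_limsup [IsProbabilityMeasure μ] [IsProbabilityMeasure ν]
    (h : IrreducibleOrder μ ν) {c : Fin L → DominatedC μ ν} {k : ℕ → Hedge μ ν (Fin L)}
    (hk : IsOptimizingSeq (fun l => (c l).1) (RelaxedValue μ ν fun l => (c l).1) k) :
    IsDualOptimizer μ ν (fun l => (c l).1)
      (domain μ ν ∩ {x | ∃ r, Tendsto (fun n => (k n).φ x) atTop (𝓝 r)})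
      {y | ∃ r, Tendsto (fun n => (k n).ψ y) atTop (𝓝 r)}
      (fun x => limsup (fun n => (k n).φ x) atTop) (fun y => limsup (fun n => (k n).ψ y) atTop)
      fun l x => limsup (fun n => (k n).θ l x) atTop where
  measurableSet_fst := h.isOpen_domain.measurableSet.inter
    (measurableSet_exists_tendsto fun n => (k n).φ.continuous.measurable)
  measurableSet_snd := measurableSet_exists_tendsto fun n => (k n).ψ.continuous.measurable
  measurable_fst := .limsup fun n => (k n).φ.continuous.measurable
  measurable_snd := .limsup fun n => (k n).ψ.continuous.measurable
  measurable_strategy l := .limsup fun n => ((k n).θ l).continuous.measurable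
  ae_mem_fst := h.ae_mem_domain.and hk.ae_tendsto_φ
  ae_mem_snd := hk.ae_tendsto_ψ
  le l x hx y hy := h.le_limsup_of_isOptimizingSeq hk l hx.1 hx.2 hy
  ae_eq γ hγ hmax l := by
    filter_upwards [hk.ae_tendsto_payoff h.integrable_id_left h.integrable_id hγ hmax l]
      with p hp hp₁ hp₂
    exact (add_limsup_mul_eq_of_tendsto
      ((tendsto_limsup_of_exists hp₁.2).add (tendsto_limsup_of_exists hp₂)) hp).symm

theorem IrreducibleOrder.exists_isDualOptimizer [IsProbabilityMeasure μ] [IsProbabilityMeasure ν]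
    [Nonempty (Fin L)] (h : IrreducibleOrder μ ν) (c : Fin L → DominatedC μ ν) :
    ∃ G H φ ψ θ, IsDualOptimizer μ ν (fun l => (c l).1) G H φ ψ θ := by
  obtain ⟨γ, hγ, hglb⟩ := exists_MLfeasible_isGLB_cost h.convexOrder h.integrable_id c
  rw [← hγ.relaxedValue_eq h.integrable_id_left h.integrable_id hglb] at hglb
  obtain ⟨k, hk⟩ := h.exists_isOptimizingSeq hglb
  exact ⟨_, _, _, _, _, h.isDualOptimizer_limsup hk⟩

theorem isDualOptimizer_of_isEmpty [IsEmpty (Fin L)] (c : Fin L → ℝ × ℝ → ℝ) :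
    IsDualOptimizer μ ν c univ univ 0 0 0 where
  measurableSet_fst := .univ
  measurableSet_snd := .univ
  measurable_fst := measurable_zero
  measurable_snd := measurable_zero
  measurable_strategy := isEmptyElim
  ae_mem_fst := .of_forall mem_univ
  ae_mem_snd := .of_forall mem_univ
  le := isEmptyElim
  ae_eq _ _ _ := isEmptyElim

theorem AssumpA'.exists_isDualOptimizer {c : Fin L → ℝ × ℝ → ℝ} (hA : AssumpA' μ ν c)
    (hirr : IrreduciblePair μ ν) : ∃ G H φ ψ θ, IsDualOptimizer μ ν c G H φ ψ θ := by
  obtain ⟨_, _, _, hν, hc, hcx, v, w, hv, hw, hvμ, hwν, hle⟩ := hA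
  rcases isEmpty_or_nonempty (Fin L) with hL | hL
  · exact ⟨_, _, _, _, _, isDualOptimizer_of_isEmpty c⟩
  · refine IrreducibleOrder.exists_isDualOptimizer ⟨hν, hcx, hirr⟩ fun l =>
      ⟨⟨c l, hc l⟩, ⟨v, hv⟩, hvμ, ⟨w, hw⟩, hwν, fun p => ?_⟩
    exact (Finset.single_le_sum (f := fun l => |c l p|) (fun l _ => abs_nonneg _)
      (Finset.mem_univ l)).trans (hle p.1 p.2)

end DualOptimizer

section ExtendTop

variable {G H : Set ℝ} {f g : ℝ → ℝ} {x y : ℝ}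

open scoped Classical in
/-- The extension by `⊤` of the restriction of `f` to `G`. -/
def extendTop (G : Set ℝ) (f : ℝ → ℝ) : ℝ → EReal := G.piecewise (fun x => (f x : EReal)) ⊤

theorem extendTop_of_mem (hx : x ∈ G) : extendTop G f x = f x := by
  classical exact piecewise_eq_of_mem _ _ _ hx

theorem extendTop_of_notMem (hx : x ∉ G) : extendTop G f x = ⊤ := by
  classical exact piecewise_eq_of_notMem _ _ _ hx

theorem measurable_extendTop (hG : MeasurableSet G) (hf : Measurable f) :
    Measurable (extendTop G f) := by
  classical exact hf.coe_real_ereal.piecewise hG measurable_const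

theorem extendTop_ne_bot (G : Set ℝ) (f : ℝ → ℝ) (x : ℝ) : extendTop G f x ≠ ⊥ := by
  by_cases hx : x ∈ G
  · simp [extendTop_of_mem hx]
  · simp [extendTop_of_notMem hx]

theorem coe_le_extendTop_add {a t : ℝ} (h : x ∈ G → y ∈ H → a ≤ f x + g y + t) :
    (a : EReal) ≤ extendTop G f x + extendTop H g y + t := by
  by_cases hx : x ∈ G
  · by_cases hy : y ∈ H
    · rw [extendTop_of_mem hx, extendTop_of_mem hy]
      exact_mod_cast h hx hy
    · simp [extendTop_of_notMem hy, EReal.add_top_of_ne_bot (extendTop_ne_bot G f x)]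
  · simp [extendTop_of_notMem hx, EReal.top_add_of_ne_bot (extendTop_ne_bot H g y)]

end ExtendTop

/-- Dual attainment: under [A'] and irreducibility of `(μ,ν)`, there is a measurable dual
optimizer `(φ, ψ, θ₁,…,θ_L)` with `φ, ψ : ℝ → ℝ ∪ {+∞}` finite a.e., satisfying the dual
inequality everywhere and, for every maximizer of the relaxed problem, the equality
`c_l = φ(x) + ψ(y) + θ_l(x)(y-x)` holds `γ_l`-a.e. for each `l`. -/
theorem dual_attainment
    (μ ν : Measure ℝ) {L : ℕ} (c : Fin L → ℝ × ℝ → ℝ)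
    (hA : AssumpA' μ ν c) (hirr : IrreduciblePair μ ν) :
    ∃ (φ ψ : ℝ → EReal) (θ : Fin L → ℝ → ℝ),
      Measurable φ ∧ Measurable ψ ∧ (∀ l, Measurable (θ l)) ∧
      (∀ x, φ x ≠ ⊥) ∧ (∀ y, ψ y ≠ ⊥) ∧
      (∀ᵐ x ∂μ, φ x ≠ ⊤) ∧ (∀ᵐ y ∂ν, ψ y ≠ ⊤) ∧
      (∀ l, ∀ x y : ℝ,
        (c l (x, y) : EReal) ≤ φ x + ψ y + ((θ l x * (y - x) : ℝ) : EReal)) ∧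
      (∀ γ : Fin L → Measure (ℝ × ℝ), MLfeasible μ ν γ →
        (∑ l, ∫ p, c l p ∂(γ l)) = RelaxedValue μ ν c →
        ∀ l, ∀ᵐ p ∂(γ l),
          (c l p : EReal) = φ p.1 + ψ p.2 + ((θ l p.1 * (p.2 - p.1) : ℝ) : EReal)) := by
  have : IsProbabilityMeasure μ := hA.1
  have : IsProbabilityMeasure ν := hA.2.1
  obtain ⟨G, H, φ, ψ, θ, h⟩ := hA.exists_isDualOptimizer hirr
  refine ⟨extendTop G φ, extendTop H ψ, θ,
    measurable_extendTop h.measurableSet_fst h.measurable_fst,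
    measurable_extendTop h.measurableSet_snd h.measurable_snd, h.measurable_strategy,
    extendTop_ne_bot G φ, extendTop_ne_bot H ψ, ?_, ?_, fun l x y => ?_, fun γ hγ hmax l => ?_⟩
  · filter_upwards [h.ae_mem_fst] with x hx using extendTop_of_mem hx ▸ EReal.coe_ne_top _
  · filter_upwards [h.ae_mem_snd] with y hy using extendTop_of_mem hy ▸ EReal.coe_ne_top _
  · exact coe_le_extendTop_add fun hx hy => h.le l x hx y hy
  · filter_upwards [h.ae_eq γ hγ hmax l, ae_comp_of_map_sum_eq measurable_fst hγ.map_fst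
      h.ae_mem_fst l, ae_comp_of_map_sum_eq measurable_snd hγ.map_snd h.ae_mem_snd l]
      with p heq hp₁ hp₂
    rw [heq hp₁ hp₂, extendTop_of_mem hp₁, extendTop_of_mem hp₂]
    push_cast
    rfl

end
end

section
/- (Immediate exercise is suboptimal under convexity) Assume [A], and suppose that y ↦ c₂(x,y) is convex for each x and that c₁(x) ≤ c₂(x,x) for μ-a.e. x. Then for every π = π_x ⊗ μ ∈ ℳ(μ,ν) and every μ₁ ≤ μ (with μ₂ := μ − μ₁ and γ_l := π_x ⊗ μ_l), one has ∫c₁ dγ₁ + ∫c₂ dγ₂ ≤ ∫c₂ dπ. Consequently it is always optimal to choose μ₁ = 0, and P_c = sup over π ∈ ℳ(μ,ν) of ∫c₂ dπ. -/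
open MeasureTheory ProbabilityTheory Set
open scoped ENNReal

noncomputable section

/-!
On the mass `μ₁` that is exercised immediately, holding instead is at least as good: given `x`, the
price `y` has conditional mean `x`, so Jensen's inequality gives
`c₁ x ≤ c₂ (x, x) ≤ ∫ c₂ (x, y) π_x(dy)`. Integrating over `μ₁` and adding `∫ c₂` over the mass
`μ - μ₁` yields the inequality. Hence each value in the supremum `P_c` is dominated by the value of
a strategy that never exercises early, and those strategies are the feasible choice `μ₁ = 0`.
-/

section Integrals

variable {X Y F : Type*} [MeasurableSpace X] [MeasurableSpace Y] [NormedAddCommGroup F]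

theorem integrable_of_norm_le_fst_add_snd {π : Measure (X × Y)} {f : X × Y → F} {v : X → ℝ}
    {w : Y → ℝ} (hf : AEStronglyMeasurable f π) (hv : Integrable v π.fst) (hw : Integrable w π.snd)
    (hfvw : ∀ x y, ‖f (x, y)‖ ≤ v x + w y) : Integrable f π :=
  ((hv.comp_measurable measurable_fst).add (hw.comp_measurable measurable_snd)).mono' hf
    (.of_forall fun p => hfvw p.1 p.2)

theorem integral_compProd_eq_add_sub [NormedSpace ℝ F] {μ μ₁ : Measure X} [IsFiniteMeasure μ]
    {κ : Kernel X Y} {f : X × Y → F} (hμ₁ : μ₁ ≤ μ) (hf : Integrable f (μ ⊗ₘ κ)) :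
    ∫ p, f p ∂(μ ⊗ₘ κ) = ∫ p, f p ∂(μ₁ ⊗ₘ κ) + ∫ p, f p ∂((μ - μ₁) ⊗ₘ κ) := by
  have : IsFiniteMeasure μ₁ := isFiniteMeasure_of_le μ hμ₁
  have hsplit : μ ⊗ₘ κ = μ₁ ⊗ₘ κ + (μ - μ₁) ⊗ₘ κ := by
    rw [← Measure.compProd_add_left, add_comm μ₁, Measure.sub_add_cancel_of_le hμ₁]
  rw [hsplit] at hf ⊢
  exact integral_add_measure hf.left_of_add_measure hf.right_of_add_measure

theorem integral_fst_compProd_le_integral_compProd {μ : Measure X} [SFinite μ] {κ : Kernel X Y}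
    [IsMarkovKernel κ] {f : X → ℝ} {g : X × Y → ℝ} (hf : Integrable f μ)
    (hg : Integrable g (μ ⊗ₘ κ)) (hfg : ∀ᵐ x ∂μ, f x ≤ ∫ y, g (x, y) ∂(κ x)) :
    ∫ p, f p.1 ∂(μ ⊗ₘ κ) ≤ ∫ p, g p ∂(μ ⊗ₘ κ) := by
  have hf_fst : Integrable f (μ ⊗ₘ κ).fst := by rwa [Measure.fst_compProd]
  calc ∫ p, f p.1 ∂(μ ⊗ₘ κ)
      = ∫ x, f x ∂(μ ⊗ₘ κ).fst :=
        (integral_map measurable_fst.aemeasurable hf_fst.aestronglyMeasurable).symm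
    _ = ∫ x, f x ∂μ := by rw [Measure.fst_compProd]
    _ ≤ ∫ x, ∫ y, g (x, y) ∂(κ x) ∂μ := integral_mono_ae hf hg.integral_compProd hfg
    _ = ∫ p, g p ∂(μ ⊗ₘ κ) := (Measure.integral_compProd hg).symm

end Integrals

section MartingaleKernel

variable {X E : Type*} [MeasurableSpace X] [NormedAddCommGroup E] [NormedSpace ℝ E]
  [MeasurableSpace E]

/-- Martingale transport of a law `μ` of time-one states to a law `ν` of time-two prices, where
`S x` is the price in state `x`. It is encoded by its disintegration kernel rather than by the plan
`μ ⊗ₘ κ`, so that an exercised part `μ₁ ≤ μ` can be transported by the same kernel; for real prices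
and `S = id` it is `MartKernel`. -/
def IsMartingaleKernel (μ : Measure X) (ν : Measure E) (S : X → E) (κ : Kernel X E) : Prop :=
  IsMarkovKernel κ ∧ (μ ⊗ₘ κ).map Prod.snd = ν ∧
    ∀ᵐ x ∂μ, Integrable id (κ x) ∧ ∫ y, y ∂(κ x) = S x

variable {μ μ₁ : Measure X} {ν : Measure E} {S : X → E} {κ : Kernel X E} {c₁ : X → ℝ}
  {c₂ : X × E → ℝ}

namespace IsMartingaleKernel

theorem integrable_of_abs_le_add [SFinite μ] (hκ : IsMartingaleKernel μ ν S κ)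
    (hc₂ : Measurable c₂) {v : X → ℝ} {w : E → ℝ} (hv : Integrable v μ) (hw : Integrable w ν)
    (hvw : ∀ x y, |c₂ (x, y)| ≤ v x + w y) : Integrable c₂ (μ ⊗ₘ κ) := by
  obtain ⟨_, hsnd, -⟩ := hκ
  refine integrable_of_norm_le_fst_add_snd hc₂.aestronglyMeasurable ?_ ?_ hvw
  · rwa [Measure.fst_compProd]
  · rwa [Measure.snd, hsnd]

variable [CompleteSpace E]

theorem ae_le_integral_of_convexOn [SFinite μ] (hκ : IsMartingaleKernel μ ν S κ)
    (hconv : ∀ᵐ x ∂μ, ConvexOn ℝ univ fun y => c₂ (x, y))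
    (hcont : ∀ᵐ x ∂μ, Continuous fun y => c₂ (x, y)) (hc₂ : Integrable c₂ (μ ⊗ₘ κ)) :
    ∀ᵐ x ∂μ, c₂ (x, S x) ≤ ∫ y, c₂ (x, y) ∂(κ x) := by
  obtain ⟨_, -, hmean⟩ := hκ
  have hsection := ((Measure.integrable_compProd_iff hc₂.aestronglyMeasurable).1 hc₂).1
  filter_upwards [hmean, hconv, hcont, hsection] with x ⟨hid, hmean_x⟩ hconv_x hcont_x hint_x
  rw [← hmean_x]
  exact hconv_x.map_integral_le hcont_x.continuousOn isClosed_univ (by simp) hid hint_x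

theorem integral_exercise_add_integral_hold_le [IsFiniteMeasure μ]
    (hκ : IsMartingaleKernel μ ν S κ) (hμ₁ : μ₁ ≤ μ)
    (hconv : ∀ᵐ x ∂μ, ConvexOn ℝ univ fun y => c₂ (x, y))
    (hcont : ∀ᵐ x ∂μ, Continuous fun y => c₂ (x, y)) (hle : ∀ᵐ x ∂μ, c₁ x ≤ c₂ (x, S x))
    (hc₁ : Integrable c₁ μ) (hc₂ : Integrable c₂ (μ ⊗ₘ κ)) :
    ∫ p, c₁ p.1 ∂(μ₁ ⊗ₘ κ) + ∫ p, c₂ p ∂((μ - μ₁) ⊗ₘ κ) ≤ ∫ p, c₂ p ∂(μ ⊗ₘ κ) := by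
  have : IsMarkovKernel κ := hκ.1
  have : IsFiniteMeasure μ₁ := isFiniteMeasure_of_le μ hμ₁
  have hexercise_le : ∀ᵐ x ∂μ, c₁ x ≤ ∫ y, c₂ (x, y) ∂(κ x) := by
    filter_upwards [hle, hκ.ae_le_integral_of_convexOn hconv hcont hc₂] with x hx hJensen
    exact hx.trans hJensen
  have hc₂_exercise : Integrable c₂ (μ₁ ⊗ₘ κ) := by
    rw [← Measure.sub_add_cancel_of_le hμ₁, Measure.compProd_add_left] at hc₂
    exact hc₂.right_of_add_measure
  rw [integral_compProd_eq_add_sub hμ₁ hc₂]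
  refine add_le_add ?_ le_rfl
  exact integral_fst_compProd_le_integral_compProd (hc₁.mono_measure hμ₁) hc₂_exercise
    (ae_mono hμ₁ hexercise_le)

end IsMartingaleKernel

theorem immediate_exercise_suboptimal_general [CompleteSpace E] [IsFiniteMeasure μ]
    {v : X → ℝ} {w : E → ℝ} (hc₁ : Integrable c₁ μ) (hc₂ : Measurable c₂)
    (hv : Integrable v μ) (hw : Integrable w ν) (hvw : ∀ x y, |c₂ (x, y)| ≤ v x + w y)
    (hconv : ∀ᵐ x ∂μ, ConvexOn ℝ univ fun y => c₂ (x, y))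
    (hcont : ∀ᵐ x ∂μ, Continuous fun y => c₂ (x, y)) (hle : ∀ᵐ x ∂μ, c₁ x ≤ c₂ (x, S x)) :
    (∀ (κ : Kernel X E) (μ₁ : Measure X), IsMartingaleKernel μ ν S κ → μ₁ ≤ μ →
      ∫ p, c₁ p.1 ∂(μ₁ ⊗ₘ κ) + ∫ p, c₂ p ∂((μ - μ₁) ⊗ₘ κ) ≤ ∫ p, c₂ p ∂(μ ⊗ₘ κ)) ∧
    sSup {r | ∃ (κ : Kernel X E) (μ₁ : Measure X), IsMartingaleKernel μ ν S κ ∧ μ₁ ≤ μ ∧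
        r = ∫ p, c₁ p.1 ∂(μ₁ ⊗ₘ κ) + ∫ p, c₂ p ∂((μ - μ₁) ⊗ₘ κ)}
      = sSup {r | ∃ κ : Kernel X E, IsMartingaleKernel μ ν S κ ∧ r = ∫ p, c₂ p ∂(μ ⊗ₘ κ)} := by
  have hvalue_le (κ : Kernel X E) (μ₁ : Measure X) (hκ : IsMartingaleKernel μ ν S κ)
      (hμ₁ : μ₁ ≤ μ) := hκ.integral_exercise_add_integral_hold_le hμ₁ hconv hcont hle hc₁
        (hκ.integrable_of_abs_le_add hc₂ hv hw hvw)
  refine ⟨hvalue_le, csSup_eq_csSup_of_forall_exists_le ?_ ?_⟩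
  · rintro _ ⟨κ, μ₁, hκ, hμ₁, rfl⟩
    exact ⟨_, ⟨κ, hκ, rfl⟩, hvalue_le κ μ₁ hκ hμ₁⟩
  · rintro _ ⟨κ, hκ, rfl⟩
    exact ⟨_, ⟨κ, 0, hκ, Measure.zero_le μ, rfl⟩, by simp⟩

end MartingaleKernel

/-- If `y ↦ c₂(x,y)` is convex and `c₁(x) ≤ c₂(x,x)` μ-a.e., then immediate exercise is
suboptimal: every feasible `(π, μ₁)` has value at most `∫ c₂ dπ`, and
`P_c = sup_{π ∈ ℳ(μ,ν)} ∫ c₂ dπ`. -/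
theorem immediate_exercise_suboptimal
    (μ ν : Measure ℝ) (c₁ : ℝ → ℝ) (c₂ : ℝ × ℝ → ℝ)
    (hA : AssumpA μ ν c₁ c₂)
    (hconv : ∀ x : ℝ, ConvexOn ℝ Set.univ fun y => c₂ (x, y))
    (hle : ∀ᵐ x ∂μ, c₁ x ≤ c₂ (x, x)) :
    (∀ (κ : Kernel ℝ ℝ) (μ₁ : Measure ℝ), MartKernel μ ν κ → μ₁ ≤ μ →
      ∫ p, c₁ p.1 ∂(μ₁ ⊗ₘ κ) + ∫ p, c₂ p ∂((μ - μ₁) ⊗ₘ κ) ≤ ∫ p, c₂ p ∂(μ ⊗ₘ κ)) ∧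
    PrimalValue μ ν c₁ c₂
      = sSup {r | ∃ κ : Kernel ℝ ℝ, MartKernel μ ν κ ∧ r = ∫ p, c₂ p ∂(μ ⊗ₘ κ)} := by
  obtain ⟨_, -, -, -, hc₁, hc₂, -, v, w, -, -, hv, hw, hvw⟩ := hA
  have hc₁_int : Integrable c₁ μ :=
    (hv.add (integrable_const (w 0))).mono' hc₁.aestronglyMeasurable
      (.of_forall fun x => (le_add_of_nonneg_right (abs_nonneg _)).trans (hvw x 0))
  exact immediate_exercise_suboptimal_general (S := id) hc₁_int hc₂.measurable hv hw
    (fun x y => (le_add_of_nonneg_left (abs_nonneg _)).trans (hvw x y))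
    (.of_forall hconv) (.of_forall fun x => by fun_prop) hle

end
end

section
/- (Convex function affine on the hull of a contact set) Let ψ : ℝ → ℝ be convex and ℓ : ℝ → ℝ affine with ℓ ≤ ψ pointwise. Let σ be a Borel probability measure on ℝ such that ψ(y) = ℓ(y) for σ-a.e. y. Then ψ = ℓ on the smallest closed interval containing the support of σ. -/
open MeasureTheory ProbabilityTheory Set
open scoped ENNReal

noncomputable section

/-!
The set where a lower semicontinuous convex function `f` is at most an upper semicontinuous concave
function `g` is convex and closed relative to the common domain `s`. If it has full measure, its
closure contains the support, hence the closed convex hull of the support, so `f ≤ g` at every point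
of that hull lying in `s`. For a minorant `g` of `f` this is equality.
-/

section ConvexOnLeConcaveOn

open scoped Topology

variable {𝕜 E β : Type*}

theorem convex_setOf_le_of_convexOn_of_concaveOn [Semiring 𝕜] [PartialOrder 𝕜] [AddCommMonoid E]
    [SMul 𝕜 E] [AddCommMonoid β] [PartialOrder β] [IsOrderedAddMonoid β] [SMul 𝕜 β]
    [PosSMulMono 𝕜 β] {s : Set E} {f g : E → β} (hf : ConvexOn 𝕜 s f) (hg : ConcaveOn 𝕜 s g) :
    Convex 𝕜 {x ∈ s | f x ≤ g x} := by
  rintro x ⟨hxs, hx⟩ y ⟨hys, hy⟩ p q hp hq hpq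
  refine ⟨hf.1 hxs hys hp hq hpq, ?_⟩
  calc
    f (p • x + q • y) ≤ p • f x + q • f y := hf.2 hxs hys hp hq hpq
    _ ≤ p • g x + q • g y := by gcongr
    _ ≤ g (p • x + q • y) := hg.2 hxs hys hp hq hpq

theorem le_of_mem_closure_setOf_le {X : Type*} [TopologicalSpace X] [LinearOrder β] {s : Set X}
    {f g : X → β} (hf : LowerSemicontinuousOn f s) (hg : UpperSemicontinuousOn g s) {x : X}
    (hxs : x ∈ s) (hx : x ∈ closure {y ∈ s | f y ≤ g y}) : f x ≤ g x := by
  by_contra! hlt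
  obtain ⟨u, hu, v, hv, huv⟩ := hlt.exists_disjoint_Iio_Ioi
  have hgf : ∀ᶠ y in 𝓝[s] x, g y < f y := by
    filter_upwards [hg x hxs u hu, hf x hxs v hv] with y hyu hyv using huv _ hyu _ hyv
  obtain ⟨y, ⟨hys, hfg⟩, hgfy⟩ :=
    ((mem_closure_iff_frequently.1 hx).and_eventually (eventually_nhdsWithin_iff.1 hgf)).exists
  exact (hgfy hys).not_ge hfg

variable [Field 𝕜] [PartialOrder 𝕜] [AddCommGroup E] [Module 𝕜 E] [TopologicalSpace E]
  [IsTopologicalAddGroup E] [ContinuousConstSMul 𝕜 E] [MeasurableSpace E] [AddCommMonoid β]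
  [LinearOrder β] [IsOrderedAddMonoid β] [SMul 𝕜 β] [PosSMulMono 𝕜 β]
  {s : Set E} {f g : E → β} {μ : Measure E}

theorem le_on_closedConvexHull_support_of_ae_le (hf : ConvexOn 𝕜 s f)
    (hfc : LowerSemicontinuousOn f s) (hg : ConcaveOn 𝕜 s g) (hgc : UpperSemicontinuousOn g s)
    (hle : ∀ᵐ x ∂μ, x ∈ s ∧ f x ≤ g x) :
    ∀ x ∈ s ∩ closedConvexHull 𝕜 μ.support, f x ≤ g x := by
  rintro x ⟨hxs, hx⟩
  have support_subset : μ.support ⊆ closure {y ∈ s | f y ≤ g y} :=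
    Measure.support_subset_of_isClosed isClosed_closure (Filter.mem_of_superset hle subset_closure)
  have hull_subset : closedConvexHull 𝕜 μ.support ⊆ closure {y ∈ s | f y ≤ g y} :=
    closedConvexHull_min support_subset
      (convex_setOf_le_of_convexOn_of_concaveOn hf hg).closure isClosed_closure
  exact le_of_mem_closure_setOf_le hfc hgc hxs (hull_subset hx)

theorem convex_affine_on_hull_of_contact_general (hf : ConvexOn 𝕜 s f)
    (hfc : LowerSemicontinuousOn f s) (hg : ConcaveOn 𝕜 s g) (hgc : UpperSemicontinuousOn g s)
    (hgf : ∀ x ∈ s, g x ≤ f x) (heq : ∀ᵐ x ∂μ, x ∈ s ∧ f x = g x) :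
    EqOn f g (s ∩ closedConvexHull 𝕜 μ.support) := fun x hx ↦
  (le_on_closedConvexHull_support_of_ae_le hf hfc hg hgc
    (heq.mono fun _ h ↦ ⟨h.1, h.2.le⟩) x hx).antisymm (hgf x hx.1)

end ConvexOnLeConcaveOn

theorem concaveOn_mul_add_const (a b : ℝ) : ConcaveOn ℝ univ fun y ↦ a * y + b :=
  ((LinearMap.mulLeft ℝ a).concaveOn convex_univ).add_const b

theorem measure_support_eq_setOf_ne_zero {X : Type*} [TopologicalSpace X] [MeasurableSpace X]
    (μ : Measure X) : μ.support = {z | ∀ U ∈ nhds z, μ U ≠ 0} := by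
  simp [Set.ext_iff, Measure.mem_support_iff_forall, pos_iff_ne_zero]

/-- A convex function equal σ-a.e. to an affine minorant is affine on the smallest closed
interval (the closed convex hull) containing the topological support of `σ`. -/
theorem convex_affine_on_hull_of_contact
    (ψ : ℝ → ℝ) (hψ : ConvexOn ℝ Set.univ ψ)
    (a b : ℝ) (hle : ∀ y, a * y + b ≤ ψ y)
    (σ : Measure ℝ) (hσ : IsProbabilityMeasure σ)
    (heq : ∀ᵐ y ∂σ, ψ y = a * y + b) :
    ∀ y ∈ closure (convexHull ℝ {z : ℝ | ∀ U ∈ nhds z, σ U ≠ 0}),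
      ψ y = a * y + b := by
  rw [← measure_support_eq_setOf_ne_zero, ← closedConvexHull_eq_closure_convexHull]
  exact fun y hy ↦ convex_affine_on_hull_of_contact_general hψ
    (hψ.continuousOn isOpen_univ).lowerSemicontinuousOn (concaveOn_mul_add_const a b)
    (ContinuousOn.upperSemicontinuousOn (by fun_prop)) (fun z _ ↦ hle z)
    (heq.mono fun z hz ↦ ⟨mem_univ z, hz⟩) ⟨mem_univ y, hy⟩

end
end
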